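/- arXiv:2003.05368 — 4 statements merged into one kernel-verified Lean document; each statement's English description precedes it below -/
import Mathlib

section
/- For every positive integer n, the number of pairs (x, y) ∈ F_{3^n} × F_{3^n} satisfying y² = x⁹ + x⁸ + x⁷ + 2x⁵ + x equals 3^n minus the sum of the n-th powers of the complex roots (with multiplicity) of the polynomial P₃(T) = T⁸ − T⁷ + 2T⁶ − 4T⁵ − 2T⁴ − 12T³ + 18T² − 27T + 81. (Equivalently, the L-polynomial of the curve y² = x⁹ + x⁸ + x⁷ + 2x⁵ + x over F₃ is 1 − T + 2T² − 4T³ − 2T⁴ − 12T⁵ + 18T⁶ − 27T⁷ + 81T⁸; the curve has exactly one point at infinity since the right-hand side has odd degree 9.) -/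
open Polynomial

/-- The Weil polynomial of the Jacobian of `y² = x⁹ + x⁸ + x⁷ + 2x⁵ + x` over `𝔽₃`,
viewed as a polynomial with complex coefficients. -/
noncomputable def P3 : Polynomial ℂ :=
  X ^ 8 - X ^ 7 + 2 * X ^ 6 - 4 * X ^ 5 - 2 * X ^ 4 - 12 * X ^ 3 + 18 * X ^ 2 - 27 * X + 81

/-!
Let `f` be the right-hand side, `d = deg f` and `χ` the quadratic character of the base field. The
function `h ↦ χ(Res(h, f))` is multiplicative on monic polynomials, so its `L`-series
`L(T) = ∑ χ(Res(h, f)) T ^ deg h` has an Euler product. Since `Res(minpoly x, f)` is a norm of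
`f(x)`, the coefficient of `T ^ n` in `T L'(T) / L(T)` is the sum of `χ(N f(x))` over the extension
of degree `n`. As the quadratic character of the extension is `χ ∘ N`, this sum is the point count
minus `q ^ n`. In each degree `≥ d` the monic polynomials are equidistributed modulo `f`, so `L` is
a polynomial of degree less than `d`, and Newton's identities express its logarithmic derivative by
the roots of its reciprocal polynomial.

The coefficients of `L` are character sums over polynomials of degree at most `8`. Over `𝔽₃` we have
`f = x (x - 1) g` with `deg g = 7`. The class of `x` has order `1093 = (3 ^ 7 - 1) / 2` modulo `g`
and symbol `1`, while `-1` has symbol `-1`. The powers of `x` and their negatives are therefore all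
the nonzero residues modulo `g`, and listing them evaluates the symbol without computing resultants.
-/

section Norm

open Module IntermediateField

variable {K L : Type*} [Field K] [Field L] [Algebra K L]

section Separable

variable [FiniteDimensional K L] [Algebra.IsSeparable K L]

theorem norm_aeval_gen_eq_resultant (pb : PowerBasis K L) (g : K[X]) :
    Algebra.norm K (aeval pb.gen g) = resultant (minpoly K pb.gen) g := by
  classical
  let E := AlgebraicClosure L
  have hsep : (minpoly K pb.gen).Separable := Algebra.IsSeparable.isSeparable K _
  have hmonic : (minpoly K pb.gen).Monic := minpoly.monic (Algebra.IsSeparable.isIntegral K _)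
  have hres := resultant_eq_prod_eval ((minpoly K pb.gen).map (algebraMap K E))
    (g.map (algebraMap K E)) g.natDegree natDegree_map_le (IsAlgClosed.splits _)
  rw [natDegree_map, (hmonic.map _).leadingCoeff, one_pow, one_mul] at hres
  apply (algebraMap K E).injective
  rw [Algebra.norm_eq_prod_embeddings K E, ← resultant_map_map, hres,
    Fintype.prod_equiv pb.liftEquiv' (fun σ => σ (aeval pb.gen g))
      (fun x => (g.map (algebraMap K E)).eval x.1)
      fun σ => by rw [PowerBasis.liftEquiv'_apply_coe, eval_map_algebraMap, aeval_algHom_apply],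
    Finset.prod_mem_multiset (f := fun x => (g.map (algebraMap K E)).eval x.1)
      (g := fun x => (g.map (algebraMap K E)).eval x) (hfg := fun _ => rfl),
    Finset.prod_eq_multiset_prod, Multiset.toFinset_val,
    Multiset.dedup_eq_self.mpr (nodup_roots hsep.map)]

theorem norm_aeval_eq_resultant_pow (x : L) (g : K[X]) :
    Algebra.norm K (aeval x g) = resultant (minpoly K x) g ^ finrank K⟮x⟯ L := by
  have : Algebra.IsSeparable K K⟮x⟯ := Algebra.isSeparable_tower_bot_of_isSeparable K K⟮x⟯ L
  have hgen := norm_aeval_gen_eq_resultant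
    (adjoin.powerBasis (Algebra.IsSeparable.isIntegral K x)) g
  rw [adjoin.powerBasis_gen, minpoly_gen] at hgen
  rw [← hgen, ← AdjoinSimple.algebraMap_gen K x, aeval_algebraMap_apply,
    AdjoinSimple.algebraMap_gen, ← Algebra.norm_norm (S := K⟮x⟯), Algebra.norm_algebraMap, map_pow]

end Separable

theorem quadraticChar_eq_quadraticChar_norm [Fintype K] [DecidableEq K] [Fintype L]
    [DecidableEq L] (hK : ringChar K ≠ 2) (a : L) :
    quadraticChar L a = quadraticChar K (Algebra.norm K a) := by
  have hL : ringChar L ≠ 2 := by rwa [← Algebra.ringChar_eq K L]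
  refine (quadraticChar_isQuadratic L).eq_of_eq_coe (quadraticChar_isQuadratic K) hL ?_
  rw [quadraticChar_eq_pow_of_char_ne_two' hL, ← map_intCast (algebraMap K L),
    quadraticChar_eq_pow_of_char_ne_two' hK, map_pow, FiniteField.algebraMap_norm_eq_pow, ← pow_mul]
  congr 1
  obtain ⟨m, hm⟩ := Nat.odd_iff.mpr (FiniteField.odd_card_of_char_ne_two hK)
  obtain ⟨t, ht⟩ : Fintype.card K - 1 ∣ Fintype.card L - 1 := by
    rw [Module.card_eq_pow_finrank (K := K) (V := L)]
    exact Nat.sub_one_dvd_pow_sub_one _ _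
  have hm0 : 0 < 2 * m := by have := Fintype.one_lt_card (α := K); omega
  have hhalf : (2 * m + 1) / 2 = m := by omega
  have hL1 : Fintype.card L = 2 * (m * t) + 1 := by
    have := Fintype.card_pos (α := L)
    rw [hm, Nat.add_sub_cancel, mul_assoc] at ht
    omega
  rw [Nat.card_eq_fintype_card, Nat.card_eq_fintype_card, ht, hL1, hm, Nat.add_sub_cancel,
    Nat.mul_div_cancel_left _ hm0, hhalf, mul_comm t]
  omega

end Norm

section MonicsOfDegree

theorem exists_ofFn_eq_of_degree_lt {R : Type*} [Semiring R] [DecidableEq R] {n : ℕ} {p : R[X]}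
    (hp : p.degree < n) : ∃ v, ofFn n v = p := by
  refine ⟨fun i => p.coeff i, ext fun m => ?_⟩
  rcases lt_or_ge m n with hm | hm
  · rw [ofFn_coeff_eq_val_of_lt _ hm]
  · rw [ofFn_coeff_eq_zero_of_ge _ hm, (degree_lt_iff_coeff_zero _ _).mp hp m hm]

variable {K : Type*} [CommRing K] [Fintype K] [DecidableEq K] {A : Type*} [AddCommMonoid A]

variable (K) in
/-- The monic polynomials of degree `d` over a finite ring. -/
noncomputable def monicsOfDegree (d : ℕ) : Finset K[X] :=
  Finset.univ.map ⟨fun v : Fin d → K => X ^ d + ofFn d v,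
    (add_right_injective _).comp (injective_ofFn d)⟩

theorem sum_monicsOfDegree (d : ℕ) (G : K[X] → A) :
    ∑ h ∈ monicsOfDegree K d, G h = ∑ v : Fin d → K, G (X ^ d + ofFn d v) :=
  Finset.sum_map _ _ _

variable [Nontrivial K]

theorem mem_monicsOfDegree {d : ℕ} {h : K[X]} :
    h ∈ monicsOfDegree K d ↔ h.Monic ∧ h.natDegree = d := by
  simp only [monicsOfDegree, Finset.mem_map, Finset.mem_univ, true_and,
    Function.Embedding.coeFn_mk]
  constructor
  · rintro ⟨v, rfl⟩
    refine ⟨monic_X_pow_add (ofFn_degree_lt v), ?_⟩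
    rw [natDegree_add_eq_left_of_degree_lt, natDegree_X_pow]
    rw [degree_X_pow]
    exact ofFn_degree_lt v
  · rintro ⟨hmonic, rfl⟩
    obtain ⟨v, hv⟩ := exists_ofFn_eq_of_degree_lt (n := h.natDegree)
        (p := h - X ^ h.natDegree) <| by
      rw [← degree_eq_natDegree hmonic.ne_zero]
      refine degree_sub_lt_left ?_ hmonic.ne_zero
        (by rw [hmonic.leadingCoeff, leadingCoeff_X_pow])
      rw [degree_X_pow, degree_eq_natDegree hmonic.ne_zero]
    exact ⟨v, by rw [hv, add_sub_cancel]⟩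

theorem ofFn_mem_monicsOfDegree {n d : ℕ} (hd : d < n) (v : Fin n → K) :
    ofFn n v ∈ monicsOfDegree K d ↔ ∀ i : Fin n, d ≤ i → v i = if (i : ℕ) = d then 1 else 0 := by
  have hcoeff : ∀ i : Fin n, (ofFn n v).coeff i = v i := fun i => ofFn_coeff_eq_val_of_lt v i.isLt
  rw [mem_monicsOfDegree]
  constructor
  · rintro ⟨hmonic, rfl⟩ i hi
    rw [← hcoeff]
    split_ifs with h
    · rw [h, hmonic.coeff_natDegree]
    · exact coeff_eq_zero_of_natDegree_lt (lt_of_le_of_ne' hi h)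
  · intro h
    have hle : (ofFn n v).natDegree ≤ d := natDegree_le_iff_coeff_eq_zero.mpr fun m hm => by
      rcases lt_or_ge m n with hmn | hmn
      · rw [hcoeff ⟨m, hmn⟩, h ⟨m, hmn⟩ hm.le, if_neg hm.ne']
      · exact ofFn_coeff_eq_zero_of_ge v hmn
    have hlead : (ofFn n v).coeff d = 1 := by rw [hcoeff ⟨d, hd⟩, h ⟨d, hd⟩ le_rfl, if_pos rfl]
    exact ⟨monic_of_natDegree_le_of_coeff_eq_one d hle hlead,
      hle.antisymm (le_natDegree_of_ne_zero (hlead ▸ one_ne_zero))⟩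

theorem sum_monicsOfDegree_of_lt {n d : ℕ} (hd : d < n) (G : K[X] → A) :
    ∑ h ∈ monicsOfDegree K d, G h =
      ∑ v : Fin n → K, if ofFn n v ∈ monicsOfDegree K d then G (ofFn n v) else 0 := by
  rw [← Finset.sum_filter]
  symm
  refine Finset.sum_nbij (ofFn n) (fun v hv => (Finset.mem_filter.mp hv).2)
    (injective_ofFn n).injOn (fun h hh => ?_) fun _ _ => rfl
  obtain ⟨hmonic, hdeg⟩ := mem_monicsOfDegree.mp hh
  obtain ⟨v, rfl⟩ := exists_ofFn_eq_of_degree_lt (n := n) (p := h) <| by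
    rw [degree_eq_natDegree hmonic.ne_zero, hdeg]
    exact_mod_cast hd
  exact ⟨v, Finset.mem_filter.mpr ⟨Finset.mem_univ v, hh⟩, rfl⟩

theorem mul_add_mem_monicsOfDegree {g q r : K[X]} {d : ℕ} (hg : g.Monic)
    (hq : q ∈ monicsOfDegree K d) (hr : r.degree < g.degree) :
    g * q + r ∈ monicsOfDegree K (d + g.natDegree) := by
  obtain ⟨hqm, rfl⟩ := mem_monicsOfDegree.mp hq
  have hdeg : r.degree < (g * q).degree := by
    rw [hqm.degree_mul]
    exact hr.trans_le (le_add_of_nonneg_right (zero_le_degree_iff.mpr hqm.ne_zero))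
  rw [mem_monicsOfDegree, natDegree_add_eq_left_of_degree_lt hdeg, hg.natDegree_mul hqm]
  exact ⟨(hg.mul hqm).add_of_left hdeg, add_comm _ _⟩

theorem divByMonic_mem_monicsOfDegree {g h : K[X]} {d : ℕ} (hg : g.Monic)
    (hh : h ∈ monicsOfDegree K (d + g.natDegree)) : h /ₘ g ∈ monicsOfDegree K d := by
  obtain ⟨hmonic, hdeg⟩ := mem_monicsOfDegree.mp hh
  have hle : g.degree ≤ h.degree := by
    rw [degree_eq_natDegree hg.ne_zero, degree_eq_natDegree hmonic.ne_zero, hdeg]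
    exact_mod_cast Nat.le_add_left _ _
  rw [mem_monicsOfDegree, Monic, leadingCoeff_divByMonic_of_monic hg hle, hmonic,
    natDegree_divByMonic h hg, hdeg, Nat.add_sub_cancel]
  exact ⟨rfl, rfl⟩

theorem sum_monicsOfDegree_add {g : K[X]} (hg : g.Monic) {n : ℕ} (hn : g.natDegree = n) (d : ℕ)
    (G : K[X] → A) :
    ∑ h ∈ monicsOfDegree K (d + n), G h =
      ∑ q ∈ monicsOfDegree K d, ∑ v : Fin n → K, G (g * q + ofFn n v) := by
  subst hn
  have hlt : ∀ v : Fin g.natDegree → K, (ofFn g.natDegree v).degree < g.degree := fun v => by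
    rw [degree_eq_natDegree hg.ne_zero]
    exact ofFn_degree_lt v
  rw [← Finset.sum_product']
  symm
  refine Finset.sum_bij (fun x _ => g * x.1 + ofFn g.natDegree x.2) ?_ ?_ ?_ fun _ _ => rfl
  · rintro ⟨q, v⟩ hx
    exact mul_add_mem_monicsOfDegree hg (Finset.mem_product.mp hx).1 (hlt v)
  · rintro ⟨q, v⟩ _ ⟨q', v'⟩ _ h
    have hqv := div_modByMonic_unique q (ofFn _ v) hg ⟨add_comm _ _, hlt v⟩
    have hqv' := div_modByMonic_unique q' (ofFn _ v') hg ⟨add_comm _ _, hlt v'⟩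
    dsimp only at h
    rw [h, hqv'.1, hqv'.2] at hqv
    rw [hqv.1, injective_ofFn _ hqv.2]
  · intro h hh
    obtain ⟨v, hv⟩ := exists_ofFn_eq_of_degree_lt (p := h %ₘ g) <| by
      rw [← degree_eq_natDegree hg.ne_zero]
      exact degree_modByMonic_lt h hg
    refine ⟨(h /ₘ g, v), Finset.mem_product.mpr ⟨divByMonic_mem_monicsOfDegree hg hh,
      Finset.mem_univ _⟩, ?_⟩
    dsimp only
    rw [hv, add_comm, modByMonic_add_div h g]

end MonicsOfDegree

section VonMangoldt

variable {K : Type*} [Field K]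

open Classical UniqueFactorizationMonoid in
/-- The von Mangoldt function on polynomials: the degree of `P` at the powers of an irreducible
polynomial `P`, and `0` elsewhere. -/
noncomputable def polynomialVonMangoldt (Q : K[X]) : ℕ :=
  if IsPrimePow Q then (radical Q).natDegree else 0

theorem polynomialVonMangoldt_pow {P : K[X]} (hP : Irreducible P) {k : ℕ} (hk : k ≠ 0) :
    polynomialVonMangoldt (P ^ k) = P.natDegree := by
  classical
  rw [polynomialVonMangoldt, if_pos (hP.prime.isPrimePow.pow hk),
    UniqueFactorizationMonoid.radical_pow_of_prime hP.prime hk]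
  exact natDegree_eq_of_degree_eq degree_normalize

theorem exists_monic_irreducible_pow_eq {Q : K[X]} (hQ : Q.Monic) (hpow : IsPrimePow Q) :
    ∃ P k, P.Monic ∧ Irreducible P ∧ k ≠ 0 ∧ P ^ k = Q := by
  classical
  obtain ⟨p, k, hp, hk, rfl⟩ := hpow
  have hassoc := normalize_associated p
  exact ⟨normalize p, k, monic_normalize hp.ne_zero, hassoc.irreducible_iff.mpr hp.irreducible,
    hk.ne', eq_of_monic_of_associated ((monic_normalize hp.ne_zero).pow k) hQ hassoc.pow_pow⟩

theorem eq_of_monic_irreducible_pow_eq_pow {P Q : K[X]} (hPm : P.Monic) (hP : Irreducible P)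
    (hQm : Q.Monic) (hQ : Irreducible Q) {j k : ℕ} (hj : j ≠ 0) (h : P ^ j = Q ^ k) : P = Q :=
  eq_of_monic_of_associated hPm hQm <|
    hP.associated_of_dvd hQ (hP.prime.dvd_of_dvd_pow (h ▸ dvd_pow_self P hj))

open Classical UniqueFactorizationMonoid in
theorem monic_of_mem_normalizedFactors {h P : K[X]} (hP : P ∈ normalizedFactors h) : P.Monic := by
  rw [← normalize_normalized_factor P hP]
  exact monic_normalize (irreducible_of_normalized_factor P hP).ne_zero

open Classical UniqueFactorizationMonoid in
theorem pow_dvd_iff_le_count_normalizedFactors {h P : K[X]} (hh : h ≠ 0) (hPm : P.Monic)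
    (hP : Irreducible P) (k : ℕ) : P ^ k ∣ h ↔ k ≤ (normalizedFactors h).count P := by
  rw [pow_dvd_iff_le_emultiplicity, emultiplicity_eq_count_normalizedFactors hP hh,
    hPm.normalize_eq_self, Nat.cast_le]

open Classical UniqueFactorizationMonoid in
theorem natDegree_eq_sum_primeFactors {h : K[X]} (hm : h.Monic) :
    h.natDegree = ∑ P ∈ primeFactors h, (normalizedFactors h).count P * P.natDegree := by
  conv_lhs => rw [← hm.normalize_eq_self, ← prod_normalizedFactors_eq hm.ne_zero]
  rw [natDegree_multiset_prod_of_monic _ fun P hP => monic_of_mem_normalizedFactors hP,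
    Finset.sum_multiset_map_count, toFinset_normalizedFactors]
  rfl

open Classical UniqueFactorizationMonoid in
theorem sum_polynomialVonMangoldt {h : K[X]} (hm : h.Monic) {T : Finset K[X]}
    (hT : ∀ Q, Q ∈ T ↔ Q.Monic ∧ Q ∣ h) :
    ∑ Q ∈ T, polynomialVonMangoldt Q = h.natDegree := by
  let I := (primeFactors h).sigma fun P => Finset.Icc 1 ((normalizedFactors h).count P)
  have hI : ∀ x ∈ I, x.1.Monic ∧ Irreducible x.1 ∧ x.2 ≠ 0 ∧ x.1 ^ x.2 ∣ h := by
    rintro ⟨P, k⟩ hx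
    obtain ⟨hP, hk⟩ := Finset.mem_sigma.mp hx
    have hP := mem_primeFactors.mp hP
    have hPm := monic_of_mem_normalizedFactors hP
    have hPi := irreducible_of_normalized_factor P hP
    obtain ⟨hk1, hk2⟩ := Finset.mem_Icc.mp hk
    exact ⟨hPm, hPi, by lia,
      (pow_dvd_iff_le_count_normalizedFactors hm.ne_zero hPm hPi k).mpr hk2⟩
  have hdeg : h.natDegree = ∑ x ∈ I, x.1.natDegree := by
    rw [natDegree_eq_sum_primeFactors hm, Finset.sum_sigma]
    simp only [Finset.sum_const, Nat.card_Icc, Nat.add_sub_cancel, smul_eq_mul]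
  rw [hdeg]
  symm
  refine Finset.sum_of_injOn (fun x => x.1 ^ x.2) ?_ ?_ ?_ ?_
  · rintro ⟨P, j⟩ hx ⟨Q, k⟩ hy hpow
    obtain ⟨hPm, hP, hj, -⟩ := hI _ hx
    obtain ⟨hQm, hQ, hk, -⟩ := hI _ hy
    dsimp only at hpow hj
    obtain rfl : P = Q := eq_of_monic_irreducible_pow_eq_pow hPm hP hQm hQ hj hpow
    rw [pow_injective_of_not_isUnit hP.not_isUnit hP.ne_zero hpow]
  · intro x hx
    obtain ⟨hPm, -, -, hdvd⟩ := hI x hx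
    exact (hT _).mpr ⟨hPm.pow _, hdvd⟩
  · intro Q hQ hQI
    obtain ⟨hQm, hQdvd⟩ := (hT Q).mp hQ
    rw [polynomialVonMangoldt, if_neg]
    intro hQpow
    obtain ⟨P, k, hPm, hP, hk, rfl⟩ := exists_monic_irreducible_pow_eq hQm hQpow
    have hcount := (pow_dvd_iff_le_count_normalizedFactors hm.ne_zero hPm hP k).mp hQdvd
    refine hQI ⟨⟨P, k⟩, Finset.mem_sigma.mpr ⟨?_, Finset.mem_Icc.mpr ⟨by lia, hcount⟩⟩, rfl⟩
    exact mem_primeFactors.mpr (Multiset.count_pos.mp (by lia))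
  · intro x hx
    obtain ⟨-, hP, hk, -⟩ := hI x hx
    exact (polynomialVonMangoldt_pow hP hk).symm

end VonMangoldt

section LSeries

open Finset.HasAntidiagonal (antidiagonal mem_antidiagonal)

variable {K R : Type*} [Field K] [Fintype K] [DecidableEq K] [CommRing R]

/-- The coefficient of `T ^ d` in the `L`-series `∑ w(h) T ^ deg h`, the sum being over all monic
polynomials `h`. -/
noncomputable def lCoeff (w : K[X] → R) (d : ℕ) : R :=
  ∑ h ∈ monicsOfDegree K d, w h

theorem lCoeff_zero (w : K[X] → R) : lCoeff w 0 = w 1 := by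
  rw [lCoeff, sum_monicsOfDegree, Fintype.sum_unique, pow_zero,
    Subsingleton.elim default (0 : Fin 0 → K), map_zero, add_zero]

/-- The coefficient of `T ^ d` in the logarithmic derivative `T L'(T) / L(T)` of the `L`-series
of a multiplicative function `w`. -/
noncomputable def logDerivCoeff (w : K[X] → R) (d : ℕ) : R :=
  ∑ Q ∈ monicsOfDegree K d, polynomialVonMangoldt Q * w Q

open Classical in
theorem sum_multiples_monicsOfDegree {i j d : ℕ} (hij : i + j = d) {Q : K[X]}
    (hQ : Q ∈ monicsOfDegree K i) (w : K[X] → R) :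
    ∑ h ∈ monicsOfDegree K d with Q ∣ h, w h = ∑ g ∈ monicsOfDegree K j, w (Q * g) := by
  obtain ⟨hQm, rfl⟩ := mem_monicsOfDegree.mp hQ
  symm
  refine Finset.sum_bij (fun g _ => Q * g) ?_ ?_ ?_ fun _ _ => rfl
  · intro g hg
    obtain ⟨hgm, hgd⟩ := mem_monicsOfDegree.mp hg
    rw [Finset.mem_filter, mem_monicsOfDegree, hQm.natDegree_mul hgm, hgd]
    exact ⟨⟨hQm.mul hgm, hij⟩, dvd_mul_right _ _⟩
  · intro _ _ _ _ h
    exact mul_left_cancel₀ hQm.ne_zero h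
  · intro h hh
    obtain ⟨hmem, g, rfl⟩ := Finset.mem_filter.mp hh
    obtain ⟨hm, hd⟩ := mem_monicsOfDegree.mp hmem
    have hgm := hQm.of_mul_monic_left hm
    rw [hQm.natDegree_mul hgm] at hd
    exact ⟨g, mem_monicsOfDegree.mpr ⟨hgm, by lia⟩, rfl⟩

open Classical in
theorem sum_antidiagonal_polynomialVonMangoldt {d : ℕ} {h : K[X]} (hh : h ∈ monicsOfDegree K d) :
    ∑ ij ∈ antidiagonal d, ∑ Q ∈ monicsOfDegree K ij.1 with Q ∣ h,
      polynomialVonMangoldt Q = d := by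
  obtain ⟨hm, rfl⟩ := mem_monicsOfDegree.mp hh
  have hT : ∀ Q, Q ∈ ((Finset.range (h.natDegree + 1)).biUnion (monicsOfDegree K)).filter (· ∣ h) ↔
      Q.Monic ∧ Q ∣ h := fun Q => by
    simp only [Finset.mem_filter, Finset.mem_biUnion, Finset.mem_range, mem_monicsOfDegree]
    exact ⟨fun ⟨⟨_, _, hQ, _⟩, hdvd⟩ => ⟨hQ, hdvd⟩, fun ⟨hQ, hdvd⟩ =>
      ⟨⟨_, Nat.lt_succ_of_le (natDegree_le_of_dvd hdvd hm.ne_zero), hQ, rfl⟩, hdvd⟩⟩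
  refine Eq.trans ?_ (sum_polynomialVonMangoldt hm hT)
  rw [Finset.Nat.sum_antidiagonal_eq_sum_range_succ_mk, Finset.filter_biUnion, Finset.sum_biUnion]
  · intro i _ j _ hij
    refine Finset.disjoint_filter_filter (Finset.disjoint_left.mpr fun Q hi hj => hij ?_)
    rw [← (mem_monicsOfDegree.mp hi).2, (mem_monicsOfDegree.mp hj).2]

theorem natCast_mul_lCoeff {w : K[X] → R}
    (hw : ∀ g h : K[X], g.Monic → h.Monic → w (g * h) = w g * w h) (d : ℕ) :
    d * lCoeff w d = ∑ ij ∈ antidiagonal d, logDerivCoeff w ij.1 * lCoeff w ij.2 := by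
  classical
  calc (d : R) * lCoeff w d
    _ = ∑ h ∈ monicsOfDegree K d, ∑ ij ∈ antidiagonal d,
          ∑ Q ∈ monicsOfDegree K ij.1 with Q ∣ h, polynomialVonMangoldt Q * w h := by
      rw [lCoeff, Finset.mul_sum]
      refine Finset.sum_congr rfl fun h hh => ?_
      conv_lhs => rw [← sum_antidiagonal_polynomialVonMangoldt hh]
      simp only [Nat.cast_sum, Finset.sum_mul]
    _ = ∑ ij ∈ antidiagonal d, ∑ Q ∈ monicsOfDegree K ij.1,
          ∑ h ∈ monicsOfDegree K d with Q ∣ h, polynomialVonMangoldt Q * w h := by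
      rw [Finset.sum_comm]
      refine Finset.sum_congr rfl fun ij _ => Finset.sum_comm' fun h Q => ?_
      simp only [Finset.mem_filter]
      tauto
    _ = ∑ ij ∈ antidiagonal d, logDerivCoeff w ij.1 * lCoeff w ij.2 := by
      refine Finset.sum_congr rfl fun ij hij => ?_
      rw [logDerivCoeff, Finset.sum_mul]
      refine Finset.sum_congr rfl fun Q hQ => ?_
      obtain ⟨hQm, -⟩ := mem_monicsOfDegree.mp hQ
      rw [← Finset.mul_sum, sum_multiples_monicsOfDegree (mem_antidiagonal.mp hij) hQ,
        Finset.sum_congr rfl fun g hg => hw Q g hQm (mem_monicsOfDegree.mp hg).1,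
        ← Finset.mul_sum, ← mul_assoc, lCoeff]

theorem X_mul_derivative_mk_lCoeff {w : K[X] → R}
    (hw : ∀ g h : K[X], g.Monic → h.Monic → w (g * h) = w g * w h) :
    PowerSeries.X * PowerSeries.derivative R (PowerSeries.mk (lCoeff w)) =
      PowerSeries.mk (logDerivCoeff w) * PowerSeries.mk (lCoeff w) := by
  ext d
  have hcoeff : PowerSeries.coeff d (PowerSeries.mk (logDerivCoeff w) * PowerSeries.mk (lCoeff w)) =
      d * lCoeff w d := by
    simp only [PowerSeries.coeff_mul, PowerSeries.coeff_mk, natCast_mul_lCoeff hw]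
  rw [hcoeff]
  rcases d with _ | d
  · rw [PowerSeries.coeff_zero_X_mul, Nat.cast_zero, zero_mul]
  · rw [PowerSeries.coeff_succ_X_mul, PowerSeries.coeff_derivative, PowerSeries.coeff_mk,
      mul_comm, Nat.cast_succ]

end LSeries

section FiniteExtension

open Module IntermediateField

variable {K L : Type*} [Field K] [Field L] [Algebra K L]

theorem natDegree_minpoly_mul_finrank [FiniteDimensional K L] (x : L) :
    (minpoly K x).natDegree * finrank K⟮x⟯ L = finrank K L := by
  rw [← adjoin.finrank (Algebra.IsIntegral.isIntegral x), Module.finrank_mul_finrank]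

theorem splits_map_of_natDegree_dvd_finrank [Finite K] [Finite L] {P : K[X]} (hP : Irreducible P)
    (hdvd : P.natDegree ∣ finrank K L) : (P.map (algebraMap K L)).Splits := by
  have hcard : Nat.card L = Nat.card K ^ finrank K L := Module.natCard_eq_pow_finrank
  have hdvd' := Polynomial.map_dvd (algebraMap K L)
    (hP.natDegree_dvd_iff_dvd_X_pow_card_pow_sub_X.mp hdvd)
  rw [← hcard, Polynomial.map_sub, Polynomial.map_pow, map_X] at hdvd'
  exact splits_X_pow_nat_card_sub_X.of_dvd
    (FiniteField.X_pow_card_sub_X_ne_zero L Finite.one_lt_card) hdvd'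

variable [Fintype L] [DecidableEq K]

theorem card_filter_minpoly_eq [Finite K] {P : K[X]} (hPm : P.Monic) (hP : Irreducible P)
    (hdvd : P.natDegree ∣ finrank K L) :
    (Finset.univ.filter fun x : L => minpoly K x = P).card = P.natDegree := by
  classical
  have hroots : (Finset.univ.filter fun x : L => minpoly K x = P) = (P.aroots L).toFinset := by
    ext x
    rw [Finset.mem_filter, Multiset.mem_toFinset, mem_aroots]
    constructor
    · rintro ⟨-, rfl⟩
      exact ⟨hP.ne_zero, minpoly.aeval _ _⟩
    · rintro ⟨-, hx⟩
      exact ⟨Finset.mem_univ _, (minpoly.eq_of_irreducible_of_monic hP hx hPm).symm⟩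
  have hsep : P.Separable := PerfectField.separable_of_irreducible hP
  rw [hroots, Multiset.toFinset_card_of_nodup (nodup_roots hsep.map),
    ← (splits_map_of_natDegree_dvd_finrank hP hdvd).natDegree_eq_card_roots, natDegree_map]

variable [Fintype K]

theorem card_filter_minpoly_pow_eq {Q : K[X]} (hQ : Q ∈ monicsOfDegree K (finrank K L)) :
    (Finset.univ.filter fun x : L => minpoly K x ^ finrank K⟮x⟯ L = Q).card =
      polynomialVonMangoldt Q := by
  obtain ⟨hQm, hQd⟩ := mem_monicsOfDegree.mp hQ
  have hirr : ∀ x : L, Irreducible (minpoly K x) := fun x =>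
    minpoly.irreducible (Algebra.IsIntegral.isIntegral x)
  by_cases hpow : IsPrimePow Q
  · obtain ⟨P, k, hPm, hP, hk, rfl⟩ := exists_monic_irreducible_pow_eq hQm hpow
    rw [natDegree_pow] at hQd
    rw [polynomialVonMangoldt_pow hP hk,
      ← card_filter_minpoly_eq (L := L) hPm hP ⟨k, by rw [← hQd, mul_comm]⟩]
    congr 1
    refine Finset.filter_congr fun x _ => ⟨fun h => ?_, ?_⟩
    · exact eq_of_monic_irreducible_pow_eq_pow (minpoly.monic (Algebra.IsIntegral.isIntegral x))
        (hirr x) hPm hP finrank_pos.ne' h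
    · rintro rfl
      congr 1
      refine Nat.eq_of_mul_eq_mul_left (hirr x).natDegree_pos ?_
      rw [natDegree_minpoly_mul_finrank, ← hQd, mul_comm]
  · rw [polynomialVonMangoldt, if_neg hpow, Finset.card_eq_zero, Finset.filter_eq_empty_iff]
    rintro x - rfl
    exact hpow ((hirr x).prime.isPrimePow.pow finrank_pos.ne')

theorem sum_minpoly_pow_eq_logDerivCoeff {R : Type*} [CommRing R] (w : K[X] → R) :
    ∑ x : L, w (minpoly K x ^ finrank K⟮x⟯ L) = logDerivCoeff w (finrank K L) := by
  have hmaps : ∀ x ∈ (Finset.univ : Finset L),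
      minpoly K x ^ finrank K⟮x⟯ L ∈ monicsOfDegree K (finrank K L) := fun x _ => by
    rw [mem_monicsOfDegree, natDegree_pow, mul_comm, natDegree_minpoly_mul_finrank]
    exact ⟨(minpoly.monic (Algebra.IsIntegral.isIntegral x)).pow _, rfl⟩
  rw [← Finset.sum_fiberwise_of_maps_to hmaps, logDerivCoeff]
  refine Finset.sum_congr rfl fun Q hQ => ?_
  rw [Finset.sum_congr rfl fun x hx => congrArg w (Finset.mem_filter.mp hx).2, Finset.sum_const,
    card_filter_minpoly_pow_eq hQ, nsmul_eq_mul]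

end FiniteExtension

section ResidueSymbol

variable {K R : Type*} [Field K] [CommMonoidWithZero R] (χ : MulChar K R) {f : K[X]}

/-- The residue symbol `h ↦ χ(Res(f, h))`; for `f` irreducible it is `χ` of the norm of the class
of `h` in the field `K[X]/(f)`. -/
noncomputable def residueSymbol (f h : K[X]) : R :=
  χ (resultant f h)

theorem resultant_eq_of_monic (hf : f.Monic) {h : K[X]} {n : ℕ} (hn : h.natDegree ≤ n) :
    resultant f h f.natDegree n = resultant f h := by
  obtain ⟨k, rfl⟩ := Nat.exists_eq_add_of_le hn
  rw [resultant_add_right_deg _ _ _ _ _ le_rfl, coeff_natDegree, hf.leadingCoeff, one_pow, one_mul]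

theorem residueSymbol_add_mul (hf : f.Monic) (h q : K[X]) :
    residueSymbol χ f (h + f * q) = residueSymbol χ f h := by
  have hle : h.natDegree ≤ max h.natDegree (q.natDegree + f.natDegree) := le_max_left _ _
  have hle' : q.natDegree + f.natDegree ≤ max h.natDegree (q.natDegree + f.natDegree) :=
    le_max_right _ _
  have hsum : (h + f * q).natDegree ≤ max h.natDegree (q.natDegree + f.natDegree) :=
    natDegree_add_le_of_degree_le hle
      ((natDegree_mul_le.trans_eq (add_comm _ _)).trans hle')
  rw [residueSymbol, ← resultant_eq_of_monic hf hsum, resultant_add_mul_right _ _ _ _ _ hle' le_rfl,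
    resultant_eq_of_monic hf hle, residueSymbol]

theorem residueSymbol_mul (hf : f.Monic) (g h : K[X]) :
    residueSymbol χ f (g * h) = residueSymbol χ f g * residueSymbol χ f h := by
  rw [residueSymbol, ← resultant_eq_of_monic hf natDegree_mul_le,
    resultant_mul_right _ _ _ _ le_rfl, map_mul, residueSymbol, residueSymbol]

theorem residueSymbol_C (a : K) : residueSymbol χ f (C a) = χ a ^ f.natDegree := by
  rw [residueSymbol, natDegree_C, resultant_C_zero_right, map_pow]

theorem residueSymbol_X_sub_C (a : K) (h : K[X]) : residueSymbol χ (X - C a) h = χ (h.eval a) := by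
  rw [residueSymbol, natDegree_X_sub_C, resultant_X_sub_C_left _ _ _ le_rfl]

theorem residueSymbol_mul_left {g : K[X]} (hf : f.Monic) (hg : g.Monic) (h : K[X]) :
    residueSymbol χ (f * g) h = residueSymbol χ f h * residueSymbol χ g h := by
  rw [residueSymbol, hf.natDegree_mul hg, resultant_mul_left _ _ _ _ le_rfl, map_mul,
    residueSymbol, residueSymbol]

end ResidueSymbol

section ResultantSymbol

variable {K R : Type*} [Field K] [CommRing R] (χ : MulChar K R) (f : K[X])

/-- The symbol `h ↦ χ(Res(h, f))`, which for monic `h` is the value of `χ` at the product of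
`f(α)` over the roots `α` of `h`. -/
noncomputable def resultantSymbol (h : K[X]) : R :=
  χ (resultant h f)

theorem resultantSymbol_one : resultantSymbol χ f 1 = 1 := by
  rw [resultantSymbol, natDegree_one, resultant_one_left, zero_mul, pow_zero, pow_zero, one_mul,
    map_one]

theorem resultantSymbol_mul {g h : K[X]} (hg : g.Monic) (hh : h.Monic) :
    resultantSymbol χ f (g * h) = resultantSymbol χ f g * resultantSymbol χ f h := by
  rw [resultantSymbol, resultantSymbol, resultantSymbol, ← map_mul,
    ← resultant_mul_left _ _ _ _ le_rfl, hg.natDegree_mul hh]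

theorem resultantSymbol_pow {g : K[X]} (hg : g.Monic) (k : ℕ) :
    resultantSymbol χ f (g ^ k) = resultantSymbol χ f g ^ k := by
  induction k with
  | zero => rw [pow_zero, pow_zero, resultantSymbol_one]
  | succ k ih => rw [pow_succ, resultantSymbol_mul χ f (hg.pow k) hg, ih, pow_succ]

variable [Fintype K] [DecidableEq K]

theorem sum_norm_aeval_eq_logDerivCoeff (f : K[X]) {L : Type*} [Field L] [Fintype L]
    [Algebra K L] :
    ∑ x : L, χ (Algebra.norm K (aeval x f)) =
      logDerivCoeff (resultantSymbol χ f) (Module.finrank K L) := by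
  rw [← sum_minpoly_pow_eq_logDerivCoeff (L := L)]
  refine Finset.sum_congr rfl fun x _ => ?_
  rw [norm_aeval_eq_resultant_pow, map_pow,
    resultantSymbol_pow χ f (minpoly.monic (Algebra.IsIntegral.isIntegral x)), resultantSymbol]

theorem lCoeff_resultantSymbol (f : K[X]) (d : ℕ) :
    lCoeff (resultantSymbol χ f) d =
      χ (-1) ^ (d * f.natDegree) * lCoeff (residueSymbol χ f) d := by
  rw [lCoeff, lCoeff, Finset.mul_sum]
  refine Finset.sum_congr rfl fun h hh => ?_
  rw [resultantSymbol, resultant_comm, (mem_monicsOfDegree.mp hh).2, map_mul, map_pow,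
    residueSymbol, (mem_monicsOfDegree.mp hh).2]

/-- The remainders of `h` modulo `f` run through all residues, and scaling a residue by a unit `a`
multiplies its symbol by `χ(a) ^ deg f`. -/
theorem lCoeff_resultantSymbol_eq_zero [IsDomain R] {f : K[X]} (hf : f.Monic)
    (hχ : χ ^ f.natDegree ≠ 1) {d : ℕ} (hd : f.natDegree ≤ d) :
    lCoeff (resultantSymbol χ f) d = 0 := by
  obtain ⟨e, rfl⟩ := Nat.exists_eq_add_of_le' hd
  obtain ⟨a, ha⟩ := MulChar.ne_one_iff.mp hχ
  rw [MulChar.pow_apply_coe] at ha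
  have hresidues : ∑ v : Fin f.natDegree → K, residueSymbol χ f (ofFn f.natDegree v) = 0 := by
    refine (mul_left_eq_self₀.mp ?_).resolve_left ha
    rw [Finset.mul_sum]
    refine Fintype.sum_equiv (MulAction.toPerm a) _ _ fun v => ?_
    rw [MulAction.toPerm_apply, Units.smul_def, map_smul, smul_eq_C_mul, residueSymbol_mul χ hf,
      residueSymbol_C]
  rw [lCoeff_resultantSymbol, lCoeff, sum_monicsOfDegree_add hf rfl]
  refine mul_eq_zero_of_right _ (Finset.sum_eq_zero fun q _ => ?_)
  simp only [add_comm (f * q), residueSymbol_add_mul χ hf, hresidues]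

end ResultantSymbol

section PowerSums

open scoped PowerSeries

variable {S : Type*} [CommRing S]

/-- The generating series of the power sums of positive degree of a multiset. -/
noncomputable def powerSumSeries (s : Multiset S) : S⟦X⟧ :=
  PowerSeries.mk fun n => if n = 0 then 0 else (s.map (· ^ n)).sum

theorem powerSumSeries_zero : powerSumSeries (0 : Multiset S) = 0 := by
  ext n
  simp [powerSumSeries]

theorem powerSumSeries_cons (a : S) (s : Multiset S) :
    powerSumSeries (a ::ₘ s) = powerSumSeries {a} + powerSumSeries s := by
  ext n
  by_cases hn : n = 0 <;> simp [powerSumSeries, hn]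

theorem one_sub_C_mul_X_mul_powerSumSeries (a : S) :
    (1 - PowerSeries.C a * PowerSeries.X) * powerSumSeries {a} =
      PowerSeries.C a * PowerSeries.X := by
  ext n
  rcases n with _ | _ | n <;>
    simp [powerSumSeries, sub_mul, mul_assoc, PowerSeries.coeff_succ_X_mul, pow_succ']

/-- Newton's identities, as a formula for the logarithmic derivative of `∏ (1 - α X)`. -/
theorem X_mul_derivative_prod_one_sub_C_mul_X (s : Multiset S) :
    PowerSeries.X * PowerSeries.derivative S
        (s.map fun a => 1 - PowerSeries.C a * PowerSeries.X).prod =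
      -powerSumSeries s * (s.map fun a => 1 - PowerSeries.C a * PowerSeries.X).prod := by
  induction s using Multiset.induction with
  | empty => simp [powerSumSeries_zero]
  | cons a s ih =>
    have hlin : PowerSeries.derivative S (1 - PowerSeries.C a * PowerSeries.X) =
        -PowerSeries.C a := by
      rw [map_sub, ← PowerSeries.smul_eq_C_mul, Derivation.map_smul, PowerSeries.derivative_X,
        PowerSeries.derivative_one, PowerSeries.smul_eq_C_mul, mul_one, zero_sub]
    rw [Multiset.map_cons, Multiset.prod_cons, powerSumSeries_cons, Derivation.leibniz, hlin,
      smul_eq_mul, smul_eq_mul]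
    linear_combination (1 - PowerSeries.C a * PowerSeries.X) * ih +
      (s.map fun a => 1 - PowerSeries.C a * PowerSeries.X).prod *
        one_sub_C_mul_X_mul_powerSumSeries a

theorem reverse_X_sub_C (a : S) : (X - C a).reverse = 1 - C a * X := by
  nontriviality S
  rw [sub_eq_add_neg, ← C_neg, reverse_add_C, ← one_mul X, reverse_mul_X, ← C_1, reverse_C,
    C_1, one_mul, natDegree_X, pow_one, C_neg, neg_mul, ← sub_eq_add_neg]

theorem coe_reverse_prod_X_sub_C [NoZeroDivisors S] (s : Multiset S) :
    ((s.map fun a => X - C a).prod.reverse : S⟦X⟧) =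
      (s.map fun a => 1 - PowerSeries.C a * PowerSeries.X).prod := by
  induction s using Multiset.induction with
  | empty => rw [Multiset.map_zero, Multiset.map_zero, Multiset.prod_zero, Multiset.prod_zero,
      ← C_1, reverse_C, coe_C, map_one]
  | cons a s ih =>
    rw [Multiset.map_cons, Multiset.map_cons, Multiset.prod_cons, Multiset.prod_cons,
      reverse_mul_of_domain, reverse_X_sub_C, coe_mul, coe_sub, coe_one, coe_mul, coe_C, coe_X, ih]

end PowerSums

section WeilPolynomial

variable {K : Type*} [Field K] [Fintype K] [DecidableEq K]

/-- The reciprocal polynomial `T ^ (N - 1) L(1 / T)`, where `N = deg f`, of the `L`-series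
`L(T) = ∑ χ(Res(h, f)) T ^ deg h`; the roots are the Frobenius eigenvalues. -/
noncomputable def weilPolynomial {R : Type*} [CommRing R] (χ : MulChar K R) (f : K[X]) : R[X] :=
  ∑ i ∈ Finset.range f.natDegree,
    monomial i (lCoeff (resultantSymbol χ f) (f.natDegree - 1 - i))

theorem weilPolynomial_ringHomComp {R S : Type*} [CommRing R] [CommRing S] (χ : MulChar K R)
    (φ : R →+* S) (f : K[X]) :
    weilPolynomial (χ.ringHomComp φ) f = (weilPolynomial χ f).map φ := by
  simp only [weilPolynomial, Polynomial.map_sum, map_monomial, lCoeff, map_sum]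
  rfl

section Coefficients

variable {R : Type*} [CommRing R] {χ : MulChar K R} {f : K[X]}

theorem coeff_weilPolynomial (i : ℕ) : (weilPolynomial χ f).coeff i =
    if i < f.natDegree then lCoeff (resultantSymbol χ f) (f.natDegree - 1 - i) else 0 := by
  simp only [weilPolynomial, finsetSum_coeff, coeff_monomial, Finset.sum_ite_eq', Finset.mem_range]

variable [IsDomain R]

theorem natDegree_weilPolynomial (hχ : χ ^ f.natDegree ≠ 1) :
    (weilPolynomial χ f).natDegree = f.natDegree - 1 := by
  have hN : f.natDegree ≠ 0 := fun h => hχ (by rw [h, pow_zero])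
  refine natDegree_eq_of_le_of_coeff_ne_zero (natDegree_le_iff_coeff_eq_zero.mpr fun i hi => ?_) ?_
  · rw [coeff_weilPolynomial, if_neg (by lia)]
  · rw [coeff_weilPolynomial, if_pos (by lia), Nat.sub_self, lCoeff_zero, resultantSymbol_one]
    exact one_ne_zero

theorem coe_reverse_weilPolynomial (hf : f.Monic) (hχ : χ ^ f.natDegree ≠ 1) :
    ((weilPolynomial χ f).reverse : PowerSeries R) =
      PowerSeries.mk (lCoeff (resultantSymbol χ f)) := by
  have hN : f.natDegree ≠ 0 := fun h => hχ (by rw [h, pow_zero])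
  ext d
  rw [coeff_coe, coeff_reverse, natDegree_weilPolynomial hχ, PowerSeries.coeff_mk,
    coeff_weilPolynomial]
  rcases le_or_gt d (f.natDegree - 1) with hd | hd
  · rw [revAt_le hd, if_pos (by lia), Nat.sub_sub_self hd]
  · rw [revAt_eq_self_of_lt hd, if_neg (by lia),
      lCoeff_resultantSymbol_eq_zero χ hf hχ (by lia)]

theorem monic_weilPolynomial (hχ : χ ^ f.natDegree ≠ 1) : (weilPolynomial χ f).Monic := by
  have hN : f.natDegree ≠ 0 := fun h => hχ (by rw [h, pow_zero])
  rw [Monic, leadingCoeff, natDegree_weilPolynomial hχ, coeff_weilPolynomial, if_pos (by lia),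
    Nat.sub_self, lCoeff_zero, resultantSymbol_one]

end Coefficients

variable {L : Type*} [Field L] [Fintype L] [Algebra K L]

/-- The two sides are the coefficients of `T L'(T) / L(T)`, computed from the Euler product and
from the factorization of `L`. -/
theorem sum_norm_aeval_eq_neg_sum_roots {S : Type*} [Field S] {χ : MulChar K S} {f : K[X]}
    (hf : f.Monic) (hχ : χ ^ f.natDegree ≠ 1) (hsplit : (weilPolynomial χ f).Splits) :
    ∑ x : L, χ (Algebra.norm K (aeval x f)) =
      -((weilPolynomial χ f).roots.map (· ^ Module.finrank K L)).sum := by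
  have hL := coe_reverse_weilPolynomial hf hχ
  have hL0 : PowerSeries.mk (lCoeff (resultantSymbol χ f)) ≠ 0 := fun h => by
    have h0 := congrArg (PowerSeries.coeff 0) h
    rw [PowerSeries.coeff_mk, lCoeff_zero, resultantSymbol_one, map_zero] at h0
    exact one_ne_zero h0
  have hlog : PowerSeries.mk (logDerivCoeff (resultantSymbol χ f)) =
      -powerSumSeries (weilPolynomial χ f).roots := by
    refine mul_right_cancel₀ hL0 ?_
    rw [← X_mul_derivative_mk_lCoeff fun _ _ => resultantSymbol_mul χ f, ← hL,
      hsplit.eq_prod_roots_of_monic (monic_weilPolynomial hχ), roots_multiset_prod_X_sub_C,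
      coe_reverse_prod_X_sub_C, X_mul_derivative_prod_one_sub_C_mul_X]
  have hcoeff := congrArg (PowerSeries.coeff (Module.finrank K L)) hlog
  rw [PowerSeries.coeff_mk, map_neg, powerSumSeries, PowerSeries.coeff_mk,
    if_neg Module.finrank_pos.ne'] at hcoeff
  rw [sum_norm_aeval_eq_logDerivCoeff, hcoeff]

theorem natCard_sq_eq_eq_sum_quadraticChar [DecidableEq L] (hL : ringChar L ≠ 2) (u : L → L) :
    (Nat.card {p : L × L // p.2 ^ 2 = u p.1} : ℤ) =
      Fintype.card L + ∑ x : L, quadraticChar L (u x) := by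
  let e : {p : L × L // p.2 ^ 2 = u p.1} ≃ Σ x : L, {y : L // y ^ 2 = u x} :=
    { toFun := fun p => ⟨p.1.1, p.1.2, p.2⟩
      invFun := fun q => ⟨(q.1, q.2.1), q.2.2⟩ }
  have hfiber : ∀ x : L, (Nat.card {y : L // y ^ 2 = u x} : ℤ) = quadraticChar L (u x) + 1 :=
    fun x => by
      rw [← quadraticChar_card_sqrts hL, Set.toFinset_card, Nat.card_eq_fintype_card]
      rfl
  rw [Nat.card_congr e, Nat.card_sigma, Nat.cast_sum, Finset.sum_congr rfl fun x _ => hfiber x,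
    Finset.sum_add_distrib, Finset.sum_const, Finset.card_univ, nsmul_eq_mul, mul_one, add_comm]

theorem natCard_sq_eq_aeval {S : Type*} [Field S] [CharZero S] [IsAlgClosed S] (hK : ringChar K ≠ 2)
    {f : K[X]} (hf : f.Monic) (hodd : Odd f.natDegree) :
    (Nat.card {p : L × L // p.2 ^ 2 = aeval p.1 f} : S) =
      Fintype.card L -
        (((weilPolynomial (quadraticChar K) f).aroots S).map (· ^ Module.finrank K L)).sum := by
  classical
  have hχ : (quadraticChar K).ringHomComp (Int.castRingHom S) ^ f.natDegree ≠ 1 := by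
    rw [((quadraticChar_isQuadratic K).comp _).pow_odd hodd, Ne,
      MulChar.ringHomComp_eq_one_iff (RingHom.injective_int _)]
    exact quadraticChar_ne_one hK
  have hsum := sum_norm_aeval_eq_neg_sum_roots (L := L) hf hχ (IsAlgClosed.splits _)
  rw [weilPolynomial_ringHomComp] at hsum
  have hL : ringChar L ≠ 2 := by rwa [← Algebra.ringChar_eq K L]
  have hcard := congrArg (Int.cast : ℤ → S)
    (natCard_sq_eq_eq_sum_quadraticChar hL fun x => aeval x f)
  rw [Finset.sum_congr rfl fun x _ => quadraticChar_eq_quadraticChar_norm hK _] at hcard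
  push_cast at hcard
  rw [hcard, sub_eq_add_neg]
  exact congrArg _ hsum

end WeilPolynomial

section OrbitSum

theorem sum_mul_eq_sum_sub_of_odd {α R : Type*} [AddGroup α] [Fintype α] [Ring R]
    [IsAddTorsionFree R] [Nontrivial R] {ψ : α → R} (hneg : ∀ v, ψ (-v) = -ψ v) {A : Finset α}
    (hA : ∀ v ∈ A, ψ v = 1) (hcard : Fintype.card α = 2 * A.card + 1) (W : α → R) :
    ∑ v, W v * ψ v = ∑ v ∈ A, (W v - W (-v)) := by
  classical
  have hzero : ψ 0 = 0 := self_eq_neg.mp (by simpa only [neg_zero] using hneg 0)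
  set B := A.image Neg.neg with hB
  have hψB : ∀ v ∈ B, ψ v = -1 := Finset.forall_mem_image.mpr fun v hv => by rw [hneg, hA v hv]
  have hAB : Disjoint A B := Finset.disjoint_left.mpr fun v hvA hvB =>
    one_ne_zero (self_eq_neg.mp ((hA v hvA).symm.trans (hψB v hvB)))
  have hsub : A ∪ B ⊆ Finset.univ.erase 0 := fun v hv => by
    refine Finset.mem_erase.mpr ⟨?_, Finset.mem_univ v⟩
    rintro rfl
    rcases Finset.mem_union.mp hv with h | h
    · exact zero_ne_one (hzero.symm.trans (hA 0 h))
    · exact zero_ne_one (zero_eq_neg.mp (hzero.symm.trans (hψB 0 h))).symm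
  have huniv : A ∪ B = Finset.univ.erase 0 := Finset.eq_of_subset_of_card_le hsub <| by
    rw [Finset.card_union_of_disjoint hAB, Finset.card_image_of_injective A neg_injective,
      Finset.card_erase_of_mem (Finset.mem_univ _), Finset.card_univ, hcard]
    omega
  calc ∑ v, W v * ψ v = ∑ v ∈ A ∪ B, W v * ψ v := by
        rw [huniv, ← Finset.sum_erase_add _ _ (Finset.mem_univ (0 : α)), hzero, mul_zero, add_zero]
    _ = ∑ v ∈ A, W v + ∑ v ∈ B, -W v := by
        rw [Finset.sum_union hAB]
        congr 1
        · exact Finset.sum_congr rfl fun v hv => by rw [hA v hv, mul_one]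
        · exact Finset.sum_congr rfl fun v hv => by rw [hψB v hv, mul_neg_one]
    _ = ∑ v ∈ A, (W v - W (-v)) := by
        rw [hB, Finset.sum_image neg_injective.injOn, ← Finset.sum_add_distrib]
        simp only [sub_eq_add_neg]

/-- The sum of `W u - W (-u)` over the first `m` points `u` of the orbit of `v` under `s`. -/
def orbitSum {α R : Type*} [Neg α] [AddCommGroup R] (s : α → α) (W : α → R) : ℕ → α → R
  | 0, _ => 0
  | m + 1, v => W v - W (-v) + orbitSum s W m (s v)

theorem orbitSum_eq_sum_range {α R : Type*} [Neg α] [AddCommGroup R] (s : α → α) (W : α → R)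
    (m : ℕ) (v : α) :
    orbitSum s W m v = ∑ k ∈ Finset.range m, (W (s^[k] v) - W (-s^[k] v)) := by
  induction m generalizing v with
  | zero => rfl
  | succ m ih =>
    rw [orbitSum, ih, Finset.sum_range_succ', add_comm]
    rfl

theorem sum_mul_eq_orbitSum {α R : Type*} [AddGroup α] [Fintype α] [Ring R] [IsAddTorsionFree R]
    [Nontrivial R] {s : α → α} {ψ : α → R} {e : α} (hs : ∀ v, ψ (s v) = ψ v)
    (hneg : ∀ v, ψ (-v) = -ψ v) (he : ψ e = 1)
    (hcard : Fintype.card α = 2 * Function.minimalPeriod s e + 1) (W : α → R) :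
    ∑ v, W v * ψ v = orbitSum s W (Function.minimalPeriod s e) e := by
  classical
  have hψ : ∀ k, ψ (s^[k] e) = 1 := fun k => by
    rw [← he]
    exact congrFun (Function.iterate_invariant (funext hs) k) e
  have hinj : Set.InjOn (fun k => s^[k] e) (Finset.range (Function.minimalPeriod s e)) := by
    simpa only [Finset.coe_range] using Function.iterate_injOn_Iio_minimalPeriod
  rw [orbitSum_eq_sum_range, ← Finset.sum_image (f := fun v => W v - W (-v)) hinj]
  refine sum_mul_eq_sum_sub_of_odd hneg (Finset.forall_mem_image.mpr fun k _ => hψ k) ?_ W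
  rw [Finset.card_image_of_injOn hinj, Finset.card_range, hcard]

end OrbitSum

section Remainder

/-- A polynomial `a₀ + a₁X + ⋯ + a₆X⁶` over `𝔽₃`, as its tuple of coefficients; on tuples, unlike
on functions `Fin 7 → ZMod 3`, the orbit sums below are evaluated quickly by the kernel. -/
abbrev Remainder : Type :=
  ZMod 3 × ZMod 3 × ZMod 3 × ZMod 3 × ZMod 3 × ZMod 3 × ZMod 3

namespace Remainder

/-- The list of coefficients, constant term first. -/
def coeffs : Remainder → List (ZMod 3)
  | (a₀, a₁, a₂, a₃, a₄, a₅, a₆) => [a₀, a₁, a₂, a₃, a₄, a₅, a₆]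

/-- The polynomial of degree less than `7` with the given coefficients. -/
noncomputable def toPoly : Remainder → (ZMod 3)[X]
  | (a₀, a₁, a₂, a₃, a₄, a₅, a₆) => ofFn 7 ![a₀, a₁, a₂, a₃, a₄, a₅, a₆]

theorem sum_ofFn_eq_sum_toPoly {A : Type*} [AddCommMonoid A] (G : (ZMod 3)[X] → A) :
    ∑ v : Fin 7 → ZMod 3, G (ofFn 7 v) = ∑ r : Remainder, G (toPoly r) := by
  refine Fintype.sum_bijective (fun v => (v 0, v 1, v 2, v 3, v 4, v 5, v 6))
    (Function.bijective_iff_has_inverse.mpr ⟨fun (a₀, a₁, a₂, a₃, a₄, a₅, a₆) =>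
      ![a₀, a₁, a₂, a₃, a₄, a₅, a₆], fun v => ?_, fun _ => rfl⟩) _ _ fun v => ?_
  · exact FinVec.etaExpand_eq v
  · exact congrArg (fun v => G (ofFn 7 v)) (FinVec.etaExpand_eq v).symm

theorem toPoly_mk (a₀ a₁ a₂ a₃ a₄ a₅ a₆ : ZMod 3) :
    toPoly (a₀, a₁, a₂, a₃, a₄, a₅, a₆) = C a₀ + C a₁ * X + C a₂ * X ^ 2 + C a₃ * X ^ 3 +
      C a₄ * X ^ 4 + C a₅ * X ^ 5 + C a₆ * X ^ 6 := by
  simp [toPoly, ofFn_eq_sum_monomial, Fin.sum_univ_seven, ← C_mul_X_pow_eq_monomial]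

theorem toPoly_neg (r : Remainder) : toPoly (-r) = -toPoly r := by
  obtain ⟨a₀, a₁, a₂, a₃, a₄, a₅, a₆⟩ := r
  simp only [Prod.neg_mk, toPoly_mk, C_neg]
  ring

theorem eval_zero_toPoly (r : Remainder) : (toPoly r).eval 0 = r.1 := by
  obtain ⟨a₀, a₁, a₂, a₃, a₄, a₅, a₆⟩ := r
  simp [toPoly_mk]

theorem eval_one_toPoly (r : Remainder) : (toPoly r).eval 1 = r.coeffs.sum := by
  obtain ⟨a₀, a₁, a₂, a₃, a₄, a₅, a₆⟩ := r
  simp [toPoly_mk, coeffs, add_assoc]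

theorem toPoly_mem_monicsOfDegree {n : ℕ} (hn : n < 7) (r : Remainder) :
    toPoly r ∈ monicsOfDegree (ZMod 3) n ↔
      r.coeffs.drop n = 1 :: List.replicate (6 - n) 0 := by
  obtain ⟨a₀, a₁, a₂, a₃, a₄, a₅, a₆⟩ := r
  rw [toPoly, ofFn_mem_monicsOfDegree hn]
  interval_cases n <;> simp [coeffs, Fin.forall_fin_succ]

end Remainder

end Remainder

section Computation

/-- The right-hand side `x⁹ + x⁸ + x⁷ + 2x⁵ + x` of the equation of the curve. -/
noncomputable def curvePolynomial : (ZMod 3)[X] :=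
  X ^ 9 + X ^ 8 + X ^ 7 + 2 * X ^ 5 + X

/-- The factor of degree `7` of `curvePolynomial`. -/
noncomputable def septicFactor : (ZMod 3)[X] :=
  X ^ 7 - X ^ 6 - X ^ 3 - X ^ 2 - X - 1

theorem curvePolynomial_eq : curvePolynomial = (X - C 0) * ((X - C 1) * septicFactor) := by
  have h3 : (3 : (ZMod 3)[X]) = 0 := CharP.cast_eq_zero (ZMod 3)[X] 3
  rw [curvePolynomial, septicFactor, C_0, C_1]
  linear_combination (X ^ 8 + X ^ 5) * h3

theorem monic_septicFactor : septicFactor.Monic := by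
  unfold septicFactor
  monicity!

theorem natDegree_septicFactor : septicFactor.natDegree = 7 := by
  unfold septicFactor
  compute_degree!

theorem monic_curvePolynomial : curvePolynomial.Monic := by
  unfold curvePolynomial
  monicity!

theorem natDegree_curvePolynomial : curvePolynomial.natDegree = 9 := by
  unfold curvePolynomial
  compute_degree!

theorem eval_zero_septicFactor : septicFactor.eval 0 = -1 := by
  simp [septicFactor]

theorem eval_one_septicFactor : septicFactor.eval 1 = -1 := by
  simp only [septicFactor, eval_sub, eval_pow, eval_X, eval_one]
  decide

theorem quadraticChar_zmod_three (a : ZMod 3) : quadraticChar (ZMod 3) a = a.valMinAbs := by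
  decide +revert

/-- The quadratic residue symbol modulo `septicFactor`. -/
noncomputable def septicSymbol (h : (ZMod 3)[X]) : ℤ :=
  residueSymbol (quadraticChar (ZMod 3)) septicFactor h

theorem residueSymbol_curvePolynomial (h : (ZMod 3)[X]) :
    residueSymbol (quadraticChar (ZMod 3)) curvePolynomial h =
      (h.eval 0 * h.eval 1).valMinAbs * septicSymbol h := by
  rw [curvePolynomial_eq, residueSymbol_mul_left _ (monic_X_sub_C 0)
    ((monic_X_sub_C 1).mul monic_septicFactor), residueSymbol_mul_left _ (monic_X_sub_C 1)
    monic_septicFactor, residueSymbol_X_sub_C, residueSymbol_X_sub_C, ← mul_assoc, ← map_mul,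
    quadraticChar_zmod_three, septicSymbol]

theorem septicSymbol_X : septicSymbol X = 1 := by
  have hres : resultant septicFactor (X - C 0) 7 1 = 1 := by
    rw [resultant_X_sub_C_right _ _ _ natDegree_septicFactor.le, eval_zero_septicFactor]
    decide
  rw [septicSymbol, residueSymbol, ← sub_zero X, ← C_0, natDegree_X_sub_C, natDegree_septicFactor,
    hres, map_one]

theorem septicSymbol_one : septicSymbol 1 = 1 := by
  rw [septicSymbol, ← C_1, residueSymbol_C, map_one, one_pow]

theorem septicSymbol_neg (h : (ZMod 3)[X]) : septicSymbol (-h) = -septicSymbol h := by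
  rw [septicSymbol, ← neg_one_mul, ← C_1, ← C_neg, residueSymbol_mul _ monic_septicFactor,
    residueSymbol_C, ← septicSymbol, natDegree_septicFactor, quadraticChar_zmod_three,
    show (-1 : ZMod 3).valMinAbs = -1 from rfl]
  ring

namespace Remainder

/-- Multiplication by `X` modulo `septicFactor`. -/
def mulX : Remainder → Remainder
  | (a₀, a₁, a₂, a₃, a₄, a₅, a₆) => (a₆, a₀ + a₆, a₁ + a₆, a₂ + a₆, a₃, a₄, a₅ + a₆)

theorem toPoly_mulX (r : Remainder) :
    ∃ q, toPoly (mulX r) = X * toPoly r + septicFactor * q := by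
  obtain ⟨a₀, a₁, a₂, a₃, a₄, a₅, a₆⟩ := r
  refine ⟨-C a₆, ?_⟩
  simp only [mulX, toPoly_mk, septicFactor, C_add]
  ring

theorem septicSymbol_toPoly_mulX (r : Remainder) :
    septicSymbol (toPoly (mulX r)) = septicSymbol (toPoly r) := by
  obtain ⟨q, hq⟩ := toPoly_mulX r
  rw [hq, septicSymbol, residueSymbol_add_mul _ monic_septicFactor,
    residueSymbol_mul _ monic_septicFactor, ← septicSymbol, septicSymbol_X, one_mul, septicSymbol]

theorem toPoly_one_zero : toPoly (1, 0) = 1 := by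
  change toPoly (1, 0, 0, 0, 0, 0, 0) = 1
  simp [toPoly_mk]

set_option maxRecDepth 100000 in
theorem minimalPeriod_mulX : Function.minimalPeriod mulX (1, 0) = 1093 := by
  have : Fact (Nat.Prime 1093) := ⟨by norm_num⟩
  have hper : mulX^[1093] (1, 0) = (1, 0) := by decide +kernel
  have hne : mulX (1, 0) ≠ (1, 0) := by decide
  exact Function.minimalPeriod_eq_prime hper hne

theorem sum_mul_septicSymbol_toPoly (W : Remainder → ℤ) :
    ∑ r, W r * septicSymbol (toPoly r) = orbitSum mulX W 1093 (1, 0) := by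
  rw [← minimalPeriod_mulX]
  refine sum_mul_eq_orbitSum (ψ := fun r => septicSymbol (toPoly r)) septicSymbol_toPoly_mulX
    (fun r => ?_) ?_ ?_ W
  · rw [toPoly_neg, septicSymbol_neg]
  · rw [toPoly_one_zero, septicSymbol_one]
  · rw [minimalPeriod_mulX]
    simp [ZMod.card]

/-- The factor contributed by the rational roots `0` and `1` of `curvePolynomial` to the symbol
of `p + r`, where `p` takes the values `u` at `0` and `v` at `1`. -/
def rationalSymbol (u v : ZMod 3) (r : Remainder) : ℤ :=
  ((u + r.1) * (v + r.coeffs.sum)).valMinAbs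

/-- `rationalSymbol 0 0`, restricted to the monic polynomials of degree `n`. -/
def monicRationalSymbol (n : ℕ) (r : Remainder) : ℤ :=
  if r.coeffs.drop n = 1 :: List.replicate (6 - n) 0 then rationalSymbol 0 0 r else 0

end Remainder

open Remainder

theorem lCoeff_curvePolynomial_of_lt {n : ℕ} (hn : n < 7) :
    lCoeff (residueSymbol (quadraticChar (ZMod 3)) curvePolynomial) n =
      orbitSum mulX (monicRationalSymbol n) 1093 (1, 0) := by
  rw [lCoeff, sum_monicsOfDegree_of_lt hn,
    sum_ofFn_eq_sum_toPoly fun h => if h ∈ monicsOfDegree (ZMod 3) n then _ else _,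
    ← sum_mul_septicSymbol_toPoly]
  refine Finset.sum_congr rfl fun r _ => ?_
  rw [residueSymbol_curvePolynomial, monicRationalSymbol, ite_mul, zero_mul, rationalSymbol,
    zero_add, zero_add, eval_zero_toPoly, eval_one_toPoly]
  exact if_congr (toPoly_mem_monicsOfDegree hn r) rfl rfl

theorem lCoeff_curvePolynomial_add (n : ℕ) :
    lCoeff (residueSymbol (quadraticChar (ZMod 3)) curvePolynomial) (n + 7) =
      ∑ q ∈ monicsOfDegree (ZMod 3) n,
        orbitSum mulX (rationalSymbol (-q.eval 0) (-q.eval 1)) 1093 (1, 0) := by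
  rw [lCoeff, sum_monicsOfDegree_add monic_septicFactor natDegree_septicFactor]
  refine Finset.sum_congr rfl fun q _ => ?_
  rw [← sum_mul_septicSymbol_toPoly, sum_ofFn_eq_sum_toPoly fun r =>
    residueSymbol (quadraticChar (ZMod 3)) curvePolynomial (septicFactor * q + r)]
  refine Finset.sum_congr rfl fun r _ => ?_
  rw [residueSymbol_curvePolynomial, eval_add, eval_add, eval_mul, eval_mul, eval_zero_septicFactor,
    eval_one_septicFactor, eval_zero_toPoly, eval_one_toPoly, neg_one_mul, neg_one_mul,
    rationalSymbol, add_comm (septicFactor * q), septicSymbol,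
    residueSymbol_add_mul _ monic_septicFactor, septicSymbol]

theorem sum_monicsOfDegree_one {A : Type*} [AddCommMonoid A] (G : (ZMod 3)[X] → A) :
    ∑ q ∈ monicsOfDegree (ZMod 3) 1, G q = ∑ a, G (X + C a) := by
  rw [sum_monicsOfDegree]
  refine Fintype.sum_equiv (Equiv.funUnique _ _) _ _ fun v => ?_
  simp [ofFn_eq_sum_monomial]

set_option maxRecDepth 100000 in
theorem orbitSum_monicRationalSymbol : ∀ n : Fin 7,
    orbitSum mulX (monicRationalSymbol n) 1093 (1, 0) = ![1, 1, 2, 4, -2, 12, 18] n := by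
  decide +kernel

set_option maxRecDepth 100000 in
theorem orbitSum_rationalSymbol_neg_one :
    orbitSum mulX (rationalSymbol (-1) (-1)) 1093 (1, 0) = 27 := by
  decide +kernel

set_option maxRecDepth 100000 in
theorem sum_orbitSum_rationalSymbol :
    ∑ a, orbitSum mulX (rationalSymbol (-a) (-(1 + a))) 1093 (1, 0) = 81 := by
  decide +kernel

theorem lCoeff_residueSymbol_curvePolynomial (n : Fin 9) :
    lCoeff (residueSymbol (quadraticChar (ZMod 3)) curvePolynomial) n =
      ![1, 1, 2, 4, -2, 12, 18, 27, 81] n := by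
  induction n using Fin.addCases (m := 7) (n := 2) with
  | left n =>
    rw [Fin.val_castAdd, lCoeff_curvePolynomial_of_lt n.isLt, orbitSum_monicRationalSymbol]
    fin_cases n <;> rfl
  | right n =>
    rw [Fin.val_natAdd, add_comm, lCoeff_curvePolynomial_add]
    fin_cases n
    · refine (lCoeff_zero _).trans ?_
      rw [eval_one, eval_one, orbitSum_rationalSymbol_neg_one]
      rfl
    · refine (sum_monicsOfDegree_one _).trans ?_
      simp only [eval_add, eval_X, eval_C, zero_add]
      exact sum_orbitSum_rationalSymbol

theorem weilPolynomial_curvePolynomial :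
    weilPolynomial (quadraticChar (ZMod 3)) curvePolynomial =
      X ^ 8 - X ^ 7 + 2 * X ^ 6 - 4 * X ^ 5 - 2 * X ^ 4 - 12 * X ^ 3 + 18 * X ^ 2 - 27 * X
        + 81 := by
  have hcoeff (i : Fin 9) :
      lCoeff (resultantSymbol (quadraticChar (ZMod 3)) curvePolynomial) (9 - 1 - i) =
        ![81, -27, 18, -12, -2, -4, 2, -1, 1] i := by
    rw [Nat.sub_sub, add_comm, ← Fin.val_rev, lCoeff_resultantSymbol,
      lCoeff_residueSymbol_curvePolynomial, natDegree_curvePolynomial, quadraticChar_zmod_three]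
    fin_cases i <;> rfl
  rw [weilPolynomial, natDegree_curvePolynomial, ← Fin.sum_univ_eq_sum_range fun i =>
    monomial i (lCoeff (resultantSymbol (quadraticChar (ZMod 3)) curvePolynomial) (9 - 1 - i))]
  simp only [hcoeff, ← C_mul_X_pow_eq_monomial]
  simp [Fin.sum_univ_succ]
  ring

theorem P3_eq_map_weilPolynomial :
    P3 = (weilPolynomial (quadraticChar (ZMod 3)) curvePolynomial).map (Int.castRingHom ℂ) := by
  simp [P3, weilPolynomial_curvePolynomial]

end Computation

/-- For every `n ≥ 1` and every finite field `F` with `3 ^ n` elements, the number of pairs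
`(x, y) ∈ F × F` with `y² = x⁹ + x⁸ + x⁷ + 2x⁵ + x` equals `3 ^ n` minus the sum of the `n`-th
powers of the complex roots (with multiplicity) of `P3`. -/
theorem point_count_F3 (n : ℕ) (hn : 0 < n) (F : Type) [Field F] [Fintype F]
    (hF : Fintype.card F = 3 ^ n) :
    ((Nat.card {p : F × F // p.2 ^ 2 = p.1 ^ 9 + p.1 ^ 8 + p.1 ^ 7 + 2 * p.1 ^ 5 + p.1} : ℕ) : ℂ)
      = 3 ^ n - (P3.roots.map (· ^ n)).sum := by
  have : CharP F 3 := charP_of_card_eq_prime_pow hF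
  let _ : Algebra (ZMod 3) F := ZMod.algebra F 3
  have hrank : Module.finrank (ZMod 3) F = n := by
    rw [Module.card_eq_pow_finrank (K := ZMod 3), ZMod.card] at hF
    exact Nat.pow_right_injective (by decide : 2 ≤ 3) hF
  have haeval (x : F) : aeval x curvePolynomial = x ^ 9 + x ^ 8 + x ^ 7 + 2 * x ^ 5 + x := by
    simp [curvePolynomial, map_ofNat]
  have hodd : Odd curvePolynomial.natDegree := by
    rw [natDegree_curvePolynomial]
    decide
  have hchar : ringChar (ZMod 3) ≠ 2 := by
    rw [ZMod.ringChar_zmod_n]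
    decide
  have hcount := natCard_sq_eq_aeval (L := F) (S := ℂ) hchar monic_curvePolynomial hodd
  rw [hF, hrank, aroots, algebraMap_int_eq, ← P3_eq_map_weilPolynomial] at hcount
  simpa only [haeval, Nat.cast_pow, Nat.cast_ofNat] using hcount
end

section
/- For every positive integer n, the number of pairs (x, y) ∈ F_{5^n} × F_{5^n} satisfying y² = x⁹ + x⁶ + 2x⁵ + x equals 5^n minus the sum of the n-th powers of the complex roots (with multiplicity) of the polynomial P₅(T) = T⁸ − T⁷ + 2T⁶ − 4T⁵ + 16T⁴ − 20T³ + 50T² − 125T + 625. (Equivalently, the L-polynomial of the curve y² = x⁹ + x⁶ + 2x⁵ + x over F₅ is 1 − T + 2T² − 4T³ + 16T⁴ − 20T⁵ + 50T⁶ − 125T⁷ + 625T⁸; the curve has exactly one point at infinity since the right-hand side has odd degree 9.) -/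
open Polynomial

/-- The Weil polynomial of the Jacobian of `y² = x⁹ + x⁶ + 2x⁵ + x` over `𝔽₅`,
viewed as a polynomial with complex coefficients. -/
noncomputable def P5 : Polynomial ℂ :=
  X ^ 8 - X ^ 7 + 2 * X ^ 6 - 4 * X ^ 5 + 16 * X ^ 4 - 20 * X ^ 3 + 50 * X ^ 2 - 125 * X + 625

/-!
Let `f` be the right-hand side of the curve and `χ g = (g / f)` the quadratic residue symbol modulo
`f`, a Dirichlet character of `𝔽₅[X]`. The number of points over the extension of degree `n` is
`5 ^ n` plus a sum of `χ` over powers of monic irreducibles of degree dividing `n`: this is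
reciprocity, and there is no sign because `-1` is a square modulo `5`. Newton's identities for the
Euler product turn this sum into minus the `n`-th power sum of the inverse roots of the
`L`-function of `χ`, so it remains to compute the coefficients `c_d`. They vanish for `d ≥ 9`, are
evaluated directly for `d ≤ 4`, and satisfy `c_(8 - e) = 5 ^ (4 - e) * c_e`. For this functional
equation, a Gauss sum over `𝔽₅[X] ⧸ (f)` is built with the quadratic character of the top
coefficient instead of an additive character, so that everything stays in `ℤ`.
-/

namespace QuadraticLFunction

section Norm

theorem det_aeval_of_splits {K n : Type*} [Field K] [Fintype n] [DecidableEq n]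
    (A : Matrix n n K) {f : K[X]} (hf : f.Splits) :
    (aeval A f).det = A.charpoly.resultant f := by
  let detAeval : K[X] →* K := Matrix.detMonoidHom.comp (aeval A).toRingHom.toMonoidHom
  have det_const (c : K) : detAeval (C c) = c ^ Fintype.card n := by
    simp [detAeval, Matrix.algebraMap_eq_diagonal]
  have det_linear (r : K) : detAeval (X - C r) = (-1) ^ Fintype.card n * A.charpoly.eval r := by
    change (aeval A (X - C r)).det = _
    rw [Matrix.eval_charpoly, ← Matrix.det_neg, neg_sub]
    simp [Matrix.algebraMap_eq_diagonal, Matrix.scalar_apply, Pi.algebraMap_def]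
  calc (aeval A f).det = detAeval (C f.leadingCoeff * (f.roots.map (X - C ·)).prod) := by
        rw [← hf.eq_prod_roots]; rfl
    _ = (-1) ^ (A.charpoly.natDegree * f.natDegree) * f.resultant A.charpoly := by
        rw [map_mul, map_multiset_prod, Multiset.map_map, det_const,
          resultant_eq_prod_eval f _ _ le_rfl hf, A.charpoly_natDegree_eq_dim,
          hf.natDegree_eq_card_roots]
        simp only [Function.comp_def, det_linear, Multiset.prod_map_mul, Multiset.map_const',
          Multiset.prod_replicate]
        ring
    _ = A.charpoly.resultant f := (resultant_comm ..).symm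

theorem det_aeval {K n : Type*} [Field K] [Fintype n] [DecidableEq n]
    (A : Matrix n n K) (f : K[X]) :
    (aeval A f).det = A.charpoly.resultant f := by
  let φ := algebraMap K (AlgebraicClosure K)
  have h := det_aeval_of_splits (φ.mapMatrix A) (IsAlgClosed.splits (f.map φ))
  have comm : (algebraMap (AlgebraicClosure K) (Matrix n n (AlgebraicClosure K))).comp φ =
      φ.mapMatrix.comp (algebraMap K (Matrix n n K)) := by
    ext : 1
    simp [Matrix.algebraMap_eq_diagonal]
  rw [← map_aeval_eq_aeval_map comm, ← RingHom.map_det, RingHom.mapMatrix_apply,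
    Matrix.charpoly_map, resultant_map_map, natDegree_map, natDegree_map] at h
  exact φ.injective h

theorem norm_aeval_gen {K S : Type*} [Field K] [CommRing S] [Algebra K S] (pb : PowerBasis K S)
    (f : K[X]) : Algebra.norm K (aeval pb.gen f) = (minpoly K pb.gen).resultant f := by
  rw [Algebra.norm_eq_matrix_det pb.basis, ← aeval_algHom_apply, det_aeval,
    charpoly_leftMulMatrix]

theorem norm_adjoinRoot_mk {K : Type*} [Field K] {g : K[X]} (hg : g.Monic) (f : K[X]) :
    Algebra.norm K (AdjoinRoot.mk g f) = g.resultant f := by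
  have h := norm_aeval_gen (AdjoinRoot.powerBasis hg.ne_zero) f
  rwa [AdjoinRoot.minpoly_powerBasis_gen_of_monic hg, AdjoinRoot.powerBasis_gen,
    AdjoinRoot.aeval_eq] at h

theorem norm_aeval {K L : Type*} [Field K] [Field L] [Algebra K L] [FiniteDimensional K L]
    (x : L) (f : K[X]) :
    Algebra.norm K (aeval x f) = (minpoly K x).resultant f ^
      (Module.finrank K L / (minpoly K x).natDegree) := by
  have hx : IsIntegral K x := Algebra.IsIntegral.isIntegral x
  let E := IntermediateField.adjoin K {x}
  let pb := IntermediateField.adjoin.powerBasis hx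
  have hgen : algebraMap E L pb.gen = x := by simp [pb, E]
  have hdeg : Module.finrank K E * Module.finrank E L = Module.finrank K L :=
    Module.finrank_mul_finrank K E L
  rw [IntermediateField.adjoin.finrank hx, ← hgen,
    minpoly.algebraMap_eq (algebraMap E L).injective] at hdeg
  rw [← hgen, aeval_algebraMap_apply, ← Algebra.norm_norm (S := E), Algebra.norm_algebraMap,
    map_pow, norm_aeval_gen, minpoly.algebraMap_eq (algebraMap E L).injective, ← hdeg,
    Nat.mul_div_cancel_left _ (minpoly.natDegree_pos (Algebra.IsIntegral.isIntegral pb.gen))]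

end Norm

section QuadraticCharacter

variable {F : Type*} [Field F] [Fintype F] [DecidableEq F]

theorem isUnit_of_norm_ne_zero {K R : Type*} [Field K] [CommRing R] [Algebra K R]
    [Module.Finite K R] {a : R} (ha : Algebra.norm K a ≠ 0) : IsUnit a := by
  rw [← Algebra.lmul_isUnit_iff (R := K), LinearMap.isUnit_iff_isUnit_det]
  exact ha.isUnit

variable (F) in
/-- The quadratic character of the norm of a finite `F`-algebra. On `F[X] ⧸ (f)` it is the
Legendre–Jacobi symbol modulo `f`. -/
noncomputable def quadraticNormChar (R : Type*) [CommRing R] [Algebra F R] [Module.Finite F R] :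
    MulChar R ℤ where
  toMonoidHom := (quadraticChar F).toMonoidHom.comp (Algebra.norm F)
  map_nonunit' a ha := by
    have norm_eq_zero : Algebra.norm F a = 0 := not_not.1 fun h => ha (isUnit_of_norm_ne_zero h)
    simp [norm_eq_zero]

theorem quadraticNormChar_apply {R : Type*} [CommRing R] [Algebra F R] [Module.Finite F R]
    (a : R) : quadraticNormChar F R a = quadraticChar F (Algebra.norm F a) := rfl

theorem pow_half_eq {q : ℕ} (hq : 1 < q) (hodd : q % 2 = 1) (n : ℕ) :
    q ^ n / 2 = (q ^ n - 1) / (q - 1) * (q / 2) := by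
  obtain ⟨m, hm⟩ : q - 1 ∣ q ^ n - 1 := by simpa using Nat.sub_dvd_pow_sub_pow q 1 n
  have hodd_pow : q ^ n % 2 = 1 := by simp [Nat.pow_mod, hodd]
  have hhalf : q - 1 = 2 * (q / 2) := by lia
  rw [hm, Nat.mul_div_cancel_left _ (by lia)]
  have : 2 * (q ^ n / 2) = 2 * (q / 2) * m := by rw [← hhalf, ← hm]; lia
  linarith

theorem quadraticChar_eq_quadraticNormChar (hF : ringChar F ≠ 2) (K : Type*) [Field K]
    [Fintype K] [DecidableEq K] [Algebra F K] : quadraticChar K = quadraticNormChar F K := by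
  have hK : ringChar K ≠ 2 := by rwa [← Algebra.ringChar_eq F K]
  have card_half : Fintype.card K / 2 =
      (Fintype.card K - 1) / (Fintype.card F - 1) * (Fintype.card F / 2) := by
    rw [Module.card_eq_pow_finrank (K := F) (V := K)]
    exact pow_half_eq (Fintype.one_lt_card) (FiniteField.odd_card_of_char_ne_two hF) _
  ext y
  refine (quadraticChar_isQuadratic K).eq_of_eq_coe (quadraticChar_isQuadratic F) hK ?_
  have hy := quadraticChar_eq_pow_of_char_ne_two' hK (y : K)
  have hNy := congrArg (algebraMap F K)
    (quadraticChar_eq_pow_of_char_ne_two' hF (Algebra.norm F (y : K)))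
  rw [map_intCast, map_pow, FiniteField.algebraMap_norm_eq_pow, ← pow_mul,
    ← Fintype.card_eq_nat_card, ← Fintype.card_eq_nat_card, ← card_half] at hNy
  exact hy.trans hNy.symm

end QuadraticCharacter

section Monics

variable {F : Type*} [Field F] [Finite F] {d : ℕ}

variable (F d) in
theorem finite_monic_natDegree_eq : {g : F[X] | g.Monic ∧ g.natDegree = d}.Finite :=
  Finite.of_equiv (Fin d → F) ((monicEquivDegreeLT d).trans (degreeLTEquiv F d).toEquiv).symm

variable (F) in
/-- The monic polynomials of degree `d` over a finite field. -/
noncomputable def monics (d : ℕ) : Finset F[X] := (finite_monic_natDegree_eq F d).toFinset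

theorem mem_monics {g : F[X]} : g ∈ monics F d ↔ g.Monic ∧ g.natDegree = d := by
  simp [monics]

theorem monics_zero : monics F 0 = {1} := by
  ext g
  rw [mem_monics, Finset.mem_singleton]
  exact ⟨fun h => eq_one_of_monic_natDegree_zero h.1 h.2, by rintro rfl; simp⟩

theorem add_mem_monics {g p : F[X]} (hg : g ∈ monics F d) (hp : p.degree < d) :
    g + p ∈ monics F d := by
  obtain ⟨hm, rfl⟩ := mem_monics.1 hg
  rw [← degree_eq_natDegree hm.ne_zero] at hp
  exact mem_monics.2 ⟨hm.add_of_left hp, natDegree_add_eq_left_of_degree_lt hp⟩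

theorem sum_monics_add {A : Type*} [AddCommMonoid A] {p : F[X]} (hp : p.degree < d)
    (G : F[X] → A) : ∑ g ∈ monics F d, G (g + p) = ∑ g ∈ monics F d, G g :=
  Finset.sum_nbij' (· + p) (· - p) (fun _ hg => add_mem_monics hg hp)
    (fun g hg => by simpa [sub_eq_add_neg] using add_mem_monics hg (p := -p) (by simpa using hp))
    (by simp) (by simp) (by simp)

theorem sum_monics_eq_sum_coeffs {A : Type*} [AddCommMonoid A] [Fintype F] (G : F[X] → A) :
    ∑ g ∈ monics F d, G g = ∑ v : Fin d → F, G (X ^ d + ∑ i : Fin d, monomial i (v i)) := by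
  let e := (monicEquivDegreeLT d).trans (degreeLTEquiv F d).toEquiv
  let _ : Fintype {g : F[X] // g.Monic ∧ g.natDegree = d} := Fintype.ofEquiv _ e.symm
  rw [Finset.sum_subtype _ fun _ => mem_monics]
  exact (Fintype.sum_equiv e.symm _ _ fun _ => rfl).symm

theorem card_monics [Fintype F] : (monics F d).card = Fintype.card F ^ d := by
  rw [Finset.card_eq_sum_ones, sum_monics_eq_sum_coeffs]
  simp

end Monics

section ResidueSum

variable {F : Type*} [Field F] {f : F[X]}

theorem mk_injOn_degree_lt (hf : f.Monic) :
    Set.InjOn (AdjoinRoot.mk f) {p | p.degree < f.degree} := by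
  intro p hp r hr h
  rw [Set.mem_ofPred_eq, ← modByMonic_eq_self_iff hf] at hp hr
  rw [← hp, ← hr, ← AdjoinRoot.modByMonicHom_mk hf, h, AdjoinRoot.modByMonicHom_mk hf]

theorem exists_mk_eq (hf : f.Monic) (a : AdjoinRoot f) :
    ∃ p : F[X], p.degree < f.degree ∧ AdjoinRoot.mk f p = a :=
  ⟨AdjoinRoot.modByMonicHom hf a, by
    obtain ⟨p, rfl⟩ := AdjoinRoot.mk_surjective a
    rw [AdjoinRoot.modByMonicHom_mk]
    exact degree_modByMonic_lt p hf, AdjoinRoot.mk_leftInverse hf a⟩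

theorem eq_and_eq_of_C_mul_eq {g h : F[X]} (hg : g.Monic) (hh : h.Monic) {s t : F} (hs : s ≠ 0)
    (heq : C s * g = C t * h) : s = t ∧ g = h := by
  obtain rfl : s = t := by simpa [hg.leadingCoeff, hh.leadingCoeff] using congrArg leadingCoeff heq
  exact ⟨rfl, mul_left_cancel₀ (C_ne_zero.2 hs) heq⟩

theorem sum_adjoinRoot {A : Type*} [AddCommMonoid A] [Fintype F] [DecidableEq F]
    [Fintype (AdjoinRoot f)] (hf : f.Monic) (G : AdjoinRoot f → A) :
    ∑ a, G a = G 0 + ∑ j ∈ Finset.range f.natDegree, ∑ g ∈ monics F j, ∑ t : Fˣ,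
      G (AdjoinRoot.mk f (C (t : F) * g)) := by
  classical
  have mem_index {x : (_ : ℕ) × F[X]} (hx : x ∈ (Finset.range f.natDegree).sigma (monics F)) :
      x.2.Monic ∧ x.2.natDegree = x.1 ∧ ∀ t : Fˣ, (C (t : F) * x.2).degree < f.degree := by
    obtain ⟨hlt, hx⟩ := Finset.mem_sigma.1 hx
    obtain ⟨hm, hdeg⟩ := mem_monics.1 hx
    refine ⟨hm, hdeg, fun t => ?_⟩
    rw [degree_C_mul t.ne_zero, degree_eq_natDegree hm.ne_zero, degree_eq_natDegree hf.ne_zero,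
      hdeg]
    exact_mod_cast Finset.mem_range.1 hlt
  rw [← Finset.add_sum_erase _ _ (Finset.mem_univ 0), Finset.sum_sigma']
  simp_rw [← Finset.sum_product']
  congr 1
  symm
  refine Finset.sum_bij (fun x _ => AdjoinRoot.mk f (C (x.2 : F) * x.1.2)) ?_ ?_ ?_
    fun _ _ => rfl
  · intro x hx
    obtain ⟨hm, -, hlt⟩ := mem_index (Finset.mem_product.1 hx).1
    refine Finset.mem_erase.2 ⟨AdjoinRoot.mk_ne_zero_of_degree_lt hf ?_ (hlt _), Finset.mem_univ _⟩
    exact mul_ne_zero (C_ne_zero.2 x.2.ne_zero) hm.ne_zero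
  · rintro ⟨⟨i, g⟩, s⟩ hx ⟨⟨j, h⟩, t⟩ hy hxy
    obtain ⟨hg, hgi, hgs⟩ := mem_index (Finset.mem_product.1 hx).1
    obtain ⟨hh, hhj, hht⟩ := mem_index (Finset.mem_product.1 hy).1
    obtain ⟨hst, rfl⟩ := eq_and_eq_of_C_mul_eq hg hh s.ne_zero
      (mk_injOn_degree_lt hf (hgs s) (hht t) hxy)
    obtain rfl := Units.ext hst
    obtain rfl : i = j := hgi.symm.trans hhj
    rfl
  · intro a ha
    obtain ⟨p, hp, rfl⟩ := exists_mk_eq hf a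
    have hp0 : p ≠ 0 := by rintro rfl; simp at ha
    have hlc : p.leadingCoeff ≠ 0 := leadingCoeff_ne_zero.2 hp0
    refine ⟨(⟨p.natDegree, C p.leadingCoeff⁻¹ * p⟩, Units.mk0 _ hlc), ?_, ?_⟩
    · simp [mem_monics, natDegree_C_mul, hlc, Monic, natDegree_lt_natDegree hp0 hp]
    · simp [← mul_assoc, ← C_mul, hlc]

end ResidueSum

section LFunction

variable {F : Type*} [Field F] {A : Type*} [CommRing A] {f : F[X]}

/-- The Dirichlet character modulo `f`, as a multiplicative function on polynomials. -/
noncomputable def dirichletChar (ψ : MulChar (AdjoinRoot f) A) : F[X] →* A :=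
  ψ.toMonoidHom.comp (AdjoinRoot.mk f).toMonoidHom

theorem dirichletChar_apply (ψ : MulChar (AdjoinRoot f) A) (g : F[X]) :
    dirichletChar ψ g = ψ (AdjoinRoot.mk f g) := rfl

/-- The `d`-th coefficient of the `L`-function of a multiplicative function on `F[X]`. -/
noncomputable def lCoeff [Finite F] (χ : F[X] →* A) (d : ℕ) : A := ∑ g ∈ monics F d, χ g

theorem lCoeff_zero [Finite F] (χ : F[X] →* A) : lCoeff χ 0 = 1 := by
  simp [lCoeff, monics_zero]

theorem lCoeff_eq_zero [Finite F] [IsDomain A] [CharZero A] [Finite (AdjoinRoot f)] (hf : f.Monic)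
    {ψ : MulChar (AdjoinRoot f) A} (hψ : ψ ≠ 1) {d : ℕ} (hd : f.natDegree ≤ d) :
    lCoeff (dirichletChar ψ) d = 0 := by
  have := Fintype.ofFinite (AdjoinRoot f)
  have translate (a : AdjoinRoot f) : ∑ g ∈ monics F d, ψ (AdjoinRoot.mk f g + a) =
      lCoeff (dirichletChar ψ) d := by
    obtain ⟨p, hp, rfl⟩ := exists_mk_eq hf a
    have hpd : p.degree < d := hp.trans_le (degree_le_natDegree.trans (by exact_mod_cast hd))
    simpa [lCoeff, dirichletChar_apply] using
      sum_monics_add hpd fun g => ψ (AdjoinRoot.mk f g)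
  have average : (Fintype.card (AdjoinRoot f) : A) * lCoeff (dirichletChar ψ) d = 0 :=
    calc _ = ∑ a, ∑ g ∈ monics F d, ψ (AdjoinRoot.mk f g + a) := by simp [translate]
      _ = ∑ g ∈ monics F d, ∑ a, ψ a := by
        rw [Finset.sum_comm]
        exact Finset.sum_congr rfl fun g _ =>
          Equiv.sum_comp (Equiv.addLeft (AdjoinRoot.mk f g)) fun a => ψ a
      _ = 0 := by simp [MulChar.sum_eq_zero_of_ne_one hψ]
  have : Nonempty (AdjoinRoot f) := ⟨0⟩
  exact (mul_eq_zero.1 average).resolve_left (by simp)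

end LFunction

section FunctionalEquation

variable {F : Type*} [Field F] {f : F[X]}

/-- The coefficient of `X ^ (deg f - 1)` in the representative of degree less than `deg f`. -/
noncomputable def topCoeff (hf : f.Monic) (a : AdjoinRoot f) : F :=
  (AdjoinRoot.modByMonicHom hf a).coeff (f.natDegree - 1)

theorem topCoeff_mk (hf : f.Monic) {p : F[X]} (hp : p.degree < f.degree) :
    topCoeff hf (AdjoinRoot.mk f p) = p.coeff (f.natDegree - 1) := by
  rw [topCoeff, AdjoinRoot.modByMonicHom_mk, (modByMonic_eq_self_iff hf).2 hp]

theorem topCoeff_add (hf : f.Monic) (a b : AdjoinRoot f) :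
    topCoeff hf (a + b) = topCoeff hf a + topCoeff hf b := by
  simp [topCoeff]

theorem topCoeff_mk_C_mul (hf : f.Monic) (t : F) (p : F[X]) :
    topCoeff hf (AdjoinRoot.mk f (C t * p)) = t * topCoeff hf (AdjoinRoot.mk f p) := by
  simp [topCoeff, ← smul_eq_C_mul, smul_modByMonic]

theorem topCoeff_mk_of_natDegree_lt (hf : f.Monic) {p : F[X]}
    (hp : p.natDegree < f.natDegree - 1) : topCoeff hf (AdjoinRoot.mk f p) = 0 := by
  rw [topCoeff_mk hf (degree_lt_degree (by lia)), coeff_eq_zero_of_natDegree_lt hp]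

theorem topCoeff_mk_of_monic (hf : f.Monic) (hf0 : 0 < f.natDegree) {p : F[X]} (hp : p.Monic)
    (hdeg : p.natDegree = f.natDegree - 1) : topCoeff hf (AdjoinRoot.mk f p) = 1 := by
  rw [topCoeff_mk hf (degree_lt_degree (by lia)), ← hdeg, hp.coeff_natDegree]

variable [Fintype F] [DecidableEq F]

theorem sum_quadraticChar_topCoeff_eq_zero (hF : ringChar F ≠ 2) (hf : f.Monic) {e j : ℕ}
    (hj : j < f.natDegree) (hje : f.natDegree ≤ j + e) {g : F[X]} (hg : g ∈ monics F j) :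
    ∑ h ∈ monics F e, quadraticChar F (topCoeff hf (AdjoinRoot.mk f (g * h))) = 0 := by
  obtain ⟨hgm, rfl⟩ := mem_monics.1 hg
  set S := ∑ h ∈ monics F e, quadraticChar F (topCoeff hf (AdjoinRoot.mk f (g * h)))
  let k := f.natDegree - 1 - g.natDegree
  have shift (t : F) (h : F[X]) : topCoeff hf (AdjoinRoot.mk f (g * (h + C t * X ^ k))) =
      topCoeff hf (AdjoinRoot.mk f (g * h)) + t := by
    have hdeg : (g * X ^ k).natDegree = f.natDegree - 1 := by
      rw [hgm.natDegree_mul (monic_X_pow k), natDegree_X_pow]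
      lia
    rw [mul_add, map_add, topCoeff_add, mul_left_comm, topCoeff_mk_C_mul,
      topCoeff_mk_of_monic hf (by lia) (hgm.mul (monic_X_pow k)) hdeg, mul_one]
  have translate (t : F) : ∑ h ∈ monics F e,
      quadraticChar F (topCoeff hf (AdjoinRoot.mk f (g * h)) + t) = S := by
    have hlt : (C t * X ^ k).degree < (e : WithBot ℕ) :=
      (degree_C_mul_X_pow_le k t).trans_lt (Nat.cast_lt.2 (by lia))
    simp_rw [← shift]
    exact sum_monics_add hlt fun h => quadraticChar F (topCoeff hf (AdjoinRoot.mk f (g * h)))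
  have average : (Fintype.card F : ℤ) * S = 0 :=
    calc (Fintype.card F : ℤ) * S
      _ = ∑ t : F, ∑ h ∈ monics F e,
          quadraticChar F (topCoeff hf (AdjoinRoot.mk f (g * h)) + t) := by
        simp only [translate, Finset.sum_const, Finset.card_univ, nsmul_eq_mul]
      _ = ∑ h ∈ monics F e, ∑ t, quadraticChar F t := by
        rw [Finset.sum_comm]
        exact Finset.sum_congr rfl fun h _ => Equiv.sum_comp (Equiv.addLeft _) (quadraticChar F)
      _ = 0 := by simp only [quadraticChar_sum_zero hF, Finset.sum_const_zero]
  exact (mul_eq_zero.1 average).resolve_left (by simp)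

theorem sum_quadraticChar_topCoeff (hF : ringChar F ≠ 2) (hf : f.Monic) {e j : ℕ}
    (he : e < f.natDegree) (hj : j < f.natDegree) {g : F[X]} (hg : g ∈ monics F j) :
    ∑ h ∈ monics F e, quadraticChar F (topCoeff hf (AdjoinRoot.mk f (g * h))) =
      if j = f.natDegree - 1 - e then (Fintype.card F : ℤ) ^ e else 0 := by
  have hdeg {h : F[X]} (hh : h ∈ monics F e) : (g * h).Monic ∧ (g * h).natDegree = j + e := by
    obtain ⟨hgm, rfl⟩ := mem_monics.1 hg
    obtain ⟨hhm, rfl⟩ := mem_monics.1 hh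
    exact ⟨hgm.mul hhm, hgm.natDegree_mul hhm⟩
  rcases lt_trichotomy (j + e) (f.natDegree - 1) with hlt | heq | hgt
  · rw [if_neg (by lia)]
    refine Finset.sum_eq_zero fun h hh => ?_
    rw [topCoeff_mk_of_natDegree_lt hf (by rwa [(hdeg hh).2]), quadraticChar_zero]
  · rw [if_pos (by lia), ← Nat.cast_pow, ← card_monics, Finset.cast_card]
    refine Finset.sum_congr rfl fun h hh => ?_
    rw [topCoeff_mk_of_monic hf (by lia) (hdeg hh).1 ((hdeg hh).2.trans heq), map_one]
  · rw [if_neg (by lia)]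
    exact sum_quadraticChar_topCoeff_eq_zero hF hf hj (by lia) hg

theorem sum_units_mul_quadraticChar (hf : f.Monic) {ψ : MulChar (AdjoinRoot f) ℤ}
    (hψF : ∀ c : F, ψ (algebraMap F _ c) = quadraticChar F c) (g h : F[X]) :
    ∑ t : Fˣ, ψ (AdjoinRoot.mk f (C (t : F) * g)) *
        quadraticChar F (topCoeff hf (AdjoinRoot.mk f (C (t : F) * g) * AdjoinRoot.mk f h)) =
      (Fintype.card F - 1) *
        (ψ (AdjoinRoot.mk f g) * quadraticChar F (topCoeff hf (AdjoinRoot.mk f (g * h)))) := by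
  have summand (t : Fˣ) : ψ (AdjoinRoot.mk f (C (t : F) * g)) *
        quadraticChar F (topCoeff hf (AdjoinRoot.mk f (C (t : F) * g) * AdjoinRoot.mk f h)) =
      ψ (AdjoinRoot.mk f g) * quadraticChar F (topCoeff hf (AdjoinRoot.mk f (g * h))) := by
    have hconst : ψ (AdjoinRoot.mk f (C (t : F))) = quadraticChar F t := hψF t
    rw [← map_mul, mul_assoc, topCoeff_mk_C_mul, map_mul (AdjoinRoot.mk f), map_mul ψ, hconst,
      map_mul (quadraticChar F)]
    linear_combination (ψ (AdjoinRoot.mk f g) *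
      quadraticChar F (topCoeff hf (AdjoinRoot.mk f (g * h)))) * quadraticChar_sq_one t.ne_zero
  rw [Fintype.sum_congr _ _ summand, Finset.sum_const, Finset.card_univ, Fintype.card_units,
    nsmul_eq_mul, Nat.cast_pred Fintype.card_pos]

variable [Fintype (AdjoinRoot f)]

/-- A Gauss sum modulo `f`, with the quadratic character of the top coefficient in place of an
additive character. -/
noncomputable def topGaussSum (hf : f.Monic) (ψ : MulChar (AdjoinRoot f) ℤ) (h : AdjoinRoot f) :
    ℤ := ∑ a, ψ a * quadraticChar F (topCoeff hf (a * h))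

/-- A character of a finite ring is primitive if, for every nonunit `h`, it is nontrivial on the
units fixing `h`. For characters modulo `f` this is the usual notion. -/
def IsPrimitive {R A : Type*} [CommRing R] [CommRing A] (ψ : MulChar R A) : Prop :=
  ∀ h : R, ¬IsUnit h → ∃ u : Rˣ, u * h = h ∧ ψ u ≠ 1

theorem topGaussSum_unit_mul (hf : f.Monic) (ψ : MulChar (AdjoinRoot f) ℤ)
    (u : (AdjoinRoot f)ˣ) (h : AdjoinRoot f) :
    ψ u * topGaussSum hf ψ (u * h) = topGaussSum hf ψ h := by
  rw [topGaussSum, Finset.mul_sum]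
  refine Fintype.sum_equiv (Units.mulRight u) _ _ fun a => ?_
  rw [Units.mulRight_apply, map_mul, mul_assoc a, mul_left_comm, mul_assoc]

theorem topGaussSum_eq (hf : f.Monic) {ψ : MulChar (AdjoinRoot f) ℤ} (hψ : IsPrimitive ψ)
    (hq : ψ.IsQuadratic) (h : AdjoinRoot f) :
    topGaussSum hf ψ h = ψ h * topGaussSum hf ψ 1 := by
  by_cases hh : IsUnit h
  · obtain ⟨u, rfl⟩ := hh
    have hsq : ψ u * ψ u = 1 := by
      rw [← pow_two, ← ψ.pow_apply_coe, hq.sq_eq_one, MulChar.one_apply_coe]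
    rw [← topGaussSum_unit_mul hf ψ u 1, mul_one, ← mul_assoc, hsq, one_mul]
  · obtain ⟨u, hu, hu1⟩ := hψ h hh
    have invariant := topGaussSum_unit_mul hf ψ u h
    rw [hu] at invariant
    rw [ψ.map_nonunit hh, zero_mul]
    exact (mul_left_eq_self₀.1 invariant).resolve_left hu1

theorem sum_topGaussSum (hF : ringChar F ≠ 2) (hf : f.Monic) {ψ : MulChar (AdjoinRoot f) ℤ}
    (hψF : ∀ c : F, ψ (algebraMap F _ c) = quadraticChar F c) {e : ℕ} (he : e < f.natDegree) :
    ∑ h ∈ monics F e, topGaussSum hf ψ (AdjoinRoot.mk f h) =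
      (Fintype.card F - 1) * Fintype.card F ^ e *
        lCoeff (dirichletChar ψ) (f.natDegree - 1 - e) := by
  have expand (h : F[X]) : topGaussSum hf ψ (AdjoinRoot.mk f h) =
      ∑ j ∈ Finset.range f.natDegree, ∑ g ∈ monics F j, (Fintype.card F - 1) *
        (ψ (AdjoinRoot.mk f g) * quadraticChar F (topCoeff hf (AdjoinRoot.mk f (g * h)))) := by
    have h0 : topCoeff hf 0 = 0 := by simp [topCoeff]
    simp only [topGaussSum, sum_adjoinRoot hf, sum_units_mul_quadraticChar hf hψF, zero_mul, h0,
      quadraticChar_zero, mul_zero, zero_add]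
  calc _ = ∑ j ∈ Finset.range f.natDegree, ∑ g ∈ monics F j, (Fintype.card F - 1) *
        (ψ (AdjoinRoot.mk f g) * ∑ h ∈ monics F e,
          quadraticChar F (topCoeff hf (AdjoinRoot.mk f (g * h)))) := by
        simp_rw [expand, Finset.mul_sum]
        rw [Finset.sum_comm]
        exact Finset.sum_congr rfl fun j _ => Finset.sum_comm
    _ = ∑ j ∈ Finset.range f.natDegree, if j = f.natDegree - 1 - e then
          (Fintype.card F - 1) * Fintype.card F ^ e * lCoeff (dirichletChar ψ) j else 0 := by
        refine Finset.sum_congr rfl fun j hj => ?_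
        rw [Finset.sum_congr rfl fun g hg => by
          rw [sum_quadraticChar_topCoeff hF hf he (Finset.mem_range.1 hj) hg]]
        split_ifs
        · simp only [lCoeff, dirichletChar_apply, Finset.mul_sum]
          exact Finset.sum_congr rfl fun g _ => by ring
        · simp
    _ = _ := by rw [Finset.sum_ite_eq', if_pos (Finset.mem_range.2 (by lia))]

theorem lCoeff_mul_topGaussSum (hF : ringChar F ≠ 2) (hf : f.Monic)
    {ψ : MulChar (AdjoinRoot f) ℤ} (hψ : IsPrimitive ψ) (hq : ψ.IsQuadratic)
    (hψF : ∀ c : F, ψ (algebraMap F _ c) = quadraticChar F c) {e : ℕ} (he : e < f.natDegree) :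
    lCoeff (dirichletChar ψ) e * topGaussSum hf ψ 1 =
      (Fintype.card F - 1) * Fintype.card F ^ e *
        lCoeff (dirichletChar ψ) (f.natDegree - 1 - e) := by
  rw [← sum_topGaussSum hF hf hψF he, lCoeff, Finset.sum_mul]
  exact Finset.sum_congr rfl fun h _ => (topGaussSum_eq hf hψ hq _).symm

omit [Fintype (AdjoinRoot f)] in
theorem lCoeff_functional_equation [Finite (AdjoinRoot f)] (hF : ringChar F ≠ 2) (hf : f.Monic)
    {g : ℕ} (hg : f.natDegree = 2 * g + 1) {ψ : MulChar (AdjoinRoot f) ℤ} (hψ : IsPrimitive ψ)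
    (hq : ψ.IsQuadratic) (hψF : ∀ c : F, ψ (algebraMap F _ c) = quadraticChar F c)
    (hmid : lCoeff (dirichletChar ψ) g ≠ 0) {e : ℕ} (he : e ≤ g) :
    lCoeff (dirichletChar ψ) (2 * g - e) =
      Fintype.card F ^ (g - e) * lCoeff (dirichletChar ψ) e := by
  have := Fintype.ofFinite (AdjoinRoot f)
  have hq1 : (Fintype.card F : ℤ) - 1 ≠ 0 := by
    have := Fintype.one_lt_card (α := F)
    lia
  have hq0 : (Fintype.card F : ℤ) ^ e ≠ 0 := by simp
  -- The middle coefficient is related to itself, which determines the Gauss sum.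
  have gauss : topGaussSum hf ψ 1 = (Fintype.card F - 1) * Fintype.card F ^ g := by
    have h := lCoeff_mul_topGaussSum hF hf hψ hq hψF (e := g) (by lia)
    rw [show f.natDegree - 1 - g = g by lia, mul_comm] at h
    exact mul_right_cancel₀ hmid h
  have h := lCoeff_mul_topGaussSum hF hf hψ hq hψF (e := e) (by lia)
  rw [gauss, show f.natDegree - 1 - e = 2 * g - e by lia, ← Nat.add_sub_cancel' he, pow_add] at h
  rw [Nat.add_sub_cancel' he] at h
  refine mul_left_cancel₀ (mul_ne_zero hq1 hq0) ?_
  linear_combination -h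

end FunctionalEquation

section Primitive

variable {F : Type*} [Field F]

theorem norm_adjoinRoot_mul {P m : F[X]} (hP : P.Monic) (hm : m.Monic) (x : F[X]) :
    Algebra.norm F (AdjoinRoot.mk (P * m) x) =
      Algebra.norm F (AdjoinRoot.mk P x) * Algebra.norm F (AdjoinRoot.mk m x) := by
  rw [norm_adjoinRoot_mk (hP.mul hm), norm_adjoinRoot_mk hP, norm_adjoinRoot_mk hm,
    hP.natDegree_mul hm, resultant_mul_left _ _ _ _ le_rfl]

theorem exists_monic_irreducible_dvd_of_not_isUnit_mk {f p : F[X]} (hf : f ≠ 0)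
    (hp : ¬IsUnit (AdjoinRoot.mk f p)) : ∃ P : F[X], P.Monic ∧ Irreducible P ∧ P ∣ f ∧ P ∣ p := by
  classical
  by_contra! hno
  refine hp ?_
  obtain ⟨a, b, hab⟩ : IsCoprime f p := by
    refine isCoprime_of_irreducible_dvd (fun h => hf h.1) fun P hP hPf hPp => ?_
    exact hno (normalize P) (monic_normalize hP.ne_zero)
      ((normalize_associated P).symm.irreducible hP) (normalize_dvd_iff.2 hPf)
      (normalize_dvd_iff.2 hPp)
  refine IsUnit.of_mul_eq_one_right (AdjoinRoot.mk f b) ?_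
  simpa using congrArg (AdjoinRoot.mk f) hab

variable [Fintype F] [DecidableEq F]

theorem exists_quadraticChar_norm_eq_neg_one (hF : ringChar F ≠ 2) {P : F[X]} (hP : P.Monic)
    (hirr : Irreducible P) :
    ∃ w : F[X], quadraticChar F (Algebra.norm F (AdjoinRoot.mk P w)) = -1 := by
  classical
  have : Fact (Irreducible P) := ⟨hirr⟩
  have : Module.Finite F (AdjoinRoot P) := hP.finite_adjoinRoot
  have : Finite (AdjoinRoot P) := Module.finite_of_finite F
  let _ : Fintype (AdjoinRoot P) := Fintype.ofFinite _
  have hchar : ringChar (AdjoinRoot P) ≠ 2 := by rwa [← Algebra.ringChar_eq F]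
  obtain ⟨a, ha⟩ := quadraticChar_exists_neg_one hchar
  obtain ⟨w, rfl⟩ := AdjoinRoot.mk_surjective a
  rw [quadraticChar_eq_quadraticNormChar hF, quadraticNormChar_apply] at ha
  exact ⟨w, ha⟩

theorem isPrimitive_quadraticNormChar (hF : ringChar F ≠ 2) {f : F[X]} (hf : f.Monic)
    (hsq : Squarefree f) [Module.Finite F (AdjoinRoot f)] :
    IsPrimitive (quadraticNormChar F (AdjoinRoot f)) := by
  intro h hh
  obtain ⟨p, rfl⟩ := AdjoinRoot.mk_surjective h
  obtain ⟨P, hP, hirr, ⟨m, rfl⟩, hPp⟩ :=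
    exists_monic_irreducible_dvd_of_not_isUnit_mk hf.ne_zero hh
  have hm : m.Monic := hP.of_mul_monic_left hf
  have hPm : ¬P ∣ m := fun hdvd => hirr.not_isUnit (hsq P (mul_dvd_mul_left P hdvd))
  obtain ⟨a, b, hab⟩ : IsCoprime P m := hirr.coprime_iff_not_dvd.2 hPm
  obtain ⟨w, hw⟩ := exists_quadraticChar_norm_eq_neg_one hF hP hirr
  -- By the Chinese remainder theorem, `u` is congruent to `w` modulo `P` and to `1` modulo `m`.
  let u := 1 + (w - 1) * (b * m)
  have mod_P : AdjoinRoot.mk P u = AdjoinRoot.mk P w :=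
    AdjoinRoot.mk_eq_mk.2 ⟨a * (1 - w), by linear_combination (w - 1) * hab⟩
  have mod_m : AdjoinRoot.mk m u = 1 := AdjoinRoot.mk_eq_mk.2 ⟨b * (w - 1), by ring⟩
  have value : quadraticNormChar F _ (AdjoinRoot.mk (P * m) u) = -1 := by
    rw [quadraticNormChar_apply, norm_adjoinRoot_mul hP hm, mod_P, mod_m, map_one, mul_one, hw]
  have hu : IsUnit (AdjoinRoot.mk (P * m) u) := by
    by_contra hu
    simp [MulChar.map_nonunit _ hu] at value
  refine ⟨hu.unit, ?_, by simp [value]⟩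
  obtain ⟨c, rfl⟩ := hPp
  rw [IsUnit.unit_spec, ← map_mul]
  exact AdjoinRoot.mk_eq_mk.2 ⟨(w - 1) * b * c, by ring⟩

end Primitive

section MonicFactors

open UniqueFactorizationMonoid

variable {F : Type*} [Field F] [DecidableEq F] {P g : F[X]}

theorem pow_dvd_iff_le_count (hP : P.Monic) (hirr : Irreducible P) (hg : g ≠ 0) (r : ℕ) :
    P ^ r ∣ g ↔ r ≤ (normalizedFactors g).count P := by
  rw [pow_dvd_iff_le_emultiplicity, le_emultiplicity_iff_replicate_le_normalizedFactors hirr hg,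
    hP.normalize_eq_self, Multiset.le_count_iff_replicate_le]

theorem monic_of_mem_normalizedFactors (hP : P ∈ normalizedFactors g) : P.Monic := by
  rw [← normalize_normalized_factor P hP]
  exact monic_normalize (irreducible_of_normalized_factor P hP).ne_zero

theorem natDegree_eq_sum_count (hg : g.Monic) :
    g.natDegree = ∑ P ∈ (normalizedFactors g).toFinset,
      (normalizedFactors g).count P * P.natDegree := by
  conv_lhs => rw [← hg.normalize_eq_self, ← prod_normalizedFactors_eq hg.ne_zero]
  rw [natDegree_multiset_prod_of_monic _ fun P hP => monic_of_mem_normalizedFactors hP,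
    Finset.sum_multiset_map_count]
  rfl

theorem mem_sigma_Icc_count (hg : g ≠ 0) {r : ℕ} :
    (⟨P, r⟩ : (_ : F[X]) × ℕ) ∈ (normalizedFactors g).toFinset.sigma
        (fun P => Finset.Icc 1 ((normalizedFactors g).count P)) ↔
      P.Monic ∧ Irreducible P ∧ 0 < r ∧ P ^ r ∣ g := by
  rw [Finset.mem_sigma, Multiset.mem_toFinset, Finset.mem_Icc]
  constructor
  · rintro ⟨hP, hr, hle⟩
    have hPm := monic_of_mem_normalizedFactors hP
    have hirr := irreducible_of_normalized_factor P hP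
    exact ⟨hPm, hirr, hr, (pow_dvd_iff_le_count hPm hirr hg r).2 hle⟩
  · rintro ⟨hPm, hirr, hr, hdvd⟩
    have hle := (pow_dvd_iff_le_count hPm hirr hg r).1 hdvd
    exact ⟨Multiset.count_pos.1 (hr.trans_le hle), hr, hle⟩

end MonicFactors

section Newton

variable {F : Type*} [Field F] [Finite F] {A : Type*} [CommRing A]

variable (F) in
theorem finite_primePowers (n : ℕ) : {x : F[X] × ℕ | x.1.Monic ∧ Irreducible x.1 ∧ 0 < x.2 ∧
    x.1.natDegree * x.2 = n}.Finite := by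
  refine (((Finset.range (n + 1)).finite_toSet.biUnion fun d _ =>
    (monics F d).finite_toSet).prod (Finset.range (n + 1)).finite_toSet).subset ?_
  rintro ⟨P, r⟩ ⟨hP, hirr, hr, rfl⟩
  have hdeg : P.natDegree ≤ P.natDegree * r := Nat.le_mul_of_pos_right _ hr
  have hrle : r ≤ P.natDegree * r := Nat.le_mul_of_pos_left _ hirr.natDegree_pos
  simp [mem_monics, hP, hdeg, hrle]

variable (F) in
/-- The pairs `(P, r)` of a monic irreducible polynomial `P` and an exponent `r > 0` for which
`P ^ r` has degree `n`. -/
noncomputable def primePowers (n : ℕ) : Finset (F[X] × ℕ) := (finite_primePowers F n).toFinset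

theorem mem_primePowers {n : ℕ} {P : F[X]} {r : ℕ} : (P, r) ∈ primePowers F n ↔
    P.Monic ∧ Irreducible P ∧ 0 < r ∧ P.natDegree * r = n := by
  simp [primePowers]

/-- The sum `∑ Λ(g) χ(g)` over the monic `g` of degree `n`, where the von Mangoldt function `Λ`
is `deg P` at the powers of an irreducible polynomial `P`. -/
noncomputable def mangoldtSum (χ : F[X] →* A) (n : ℕ) : A :=
  ∑ x ∈ primePowers F n, x.1.natDegree * χ x.1 ^ x.2

open UniqueFactorizationMonoid in
open scoped Classical in
theorem natDegree_eq_sum_primePowers_dvd {g : F[X]} (hg : g.Monic) :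
    g.natDegree = ∑ i ∈ Finset.range (g.natDegree + 1),
      ∑ x ∈ primePowers F i with x.1 ^ x.2 ∣ g, x.1.natDegree := by
  have count_eq (P : F[X]) : (normalizedFactors g).count P * P.natDegree =
      ∑ _r ∈ Finset.Icc 1 ((normalizedFactors g).count P), P.natDegree := by simp
  conv_lhs => rw [natDegree_eq_sum_count hg]
  simp_rw [count_eq]
  rw [Finset.sum_sigma', Finset.sum_sigma']
  have natDegree_le {P : F[X]} {r : ℕ} (hdvd : P ^ r ∣ g) : P.natDegree * r < g.natDegree + 1 := by
    rw [mul_comm, ← natDegree_pow]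
    exact Nat.lt_succ_of_le (natDegree_le_of_dvd hdvd hg.ne_zero)
  refine Finset.sum_bij' (fun x _ => ⟨x.1.natDegree * x.2, x.1, x.2⟩) (fun x _ => ⟨x.2.1, x.2.2⟩)
    ?_ ?_ (fun _ _ => rfl) ?_ fun _ _ => rfl
  · rintro ⟨P, r⟩ hx
    obtain ⟨hP, hirr, hr, hdvd⟩ := (mem_sigma_Icc_count hg.ne_zero).1 hx
    simp [mem_primePowers, hP, hirr, hr, hdvd, natDegree_le hdvd]
  · rintro ⟨i, P, r⟩ hx
    obtain ⟨hx, hdvd⟩ := Finset.mem_filter.1 (Finset.mem_sigma.1 hx).2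
    obtain ⟨hP, hirr, hr, -⟩ := mem_primePowers.1 hx
    exact (mem_sigma_Icc_count hg.ne_zero).2 ⟨hP, hirr, hr, hdvd⟩
  · rintro ⟨i, P, r⟩ hx
    obtain ⟨-, -, -, rfl⟩ := mem_primePowers.1 (Finset.mem_filter.1 (Finset.mem_sigma.1 hx).2).1
    rfl

open scoped Classical in
theorem sum_monics_dvd (χ : F[X] →* A) {Q : F[X]} (hQ : Q.Monic) {d : ℕ} (hd : Q.natDegree ≤ d) :
    ∑ g ∈ monics F d with Q ∣ g, χ g = χ Q * lCoeff χ (d - Q.natDegree) := by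
  rw [lCoeff, Finset.mul_sum]
  symm
  refine Finset.sum_bij (fun h _ => Q * h) ?_ (fun _ _ _ _ => mul_left_cancel₀ hQ.ne_zero) ?_
    fun h _ => (map_mul χ Q h).symm
  · intro h hh
    obtain ⟨hm, hdeg⟩ := mem_monics.1 hh
    rw [Finset.mem_filter, mem_monics, hQ.natDegree_mul hm]
    exact ⟨⟨hQ.mul hm, by lia⟩, dvd_mul_right Q h⟩
  · intro g hg
    obtain ⟨hg, h, rfl⟩ := Finset.mem_filter.1 hg
    obtain ⟨hm, hdeg⟩ := mem_monics.1 hg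
    have hh : h.Monic := hQ.of_mul_monic_left hm
    rw [hQ.natDegree_mul hh] at hdeg
    exact ⟨h, mem_monics.2 ⟨hh, by lia⟩, rfl⟩

theorem natCast_mul_lCoeff (χ : F[X] →* A) (d : ℕ) : d * lCoeff χ d =
    ∑ i ∈ Finset.range (d + 1), mangoldtSum χ i * lCoeff χ (d - i) := by
  classical
  calc (d : A) * lCoeff χ d
      = ∑ g ∈ monics F d, ∑ i ∈ Finset.range (d + 1), ∑ x ∈ primePowers F i,
          if x.1 ^ x.2 ∣ g then x.1.natDegree * χ g else 0 := by
        rw [lCoeff, Finset.mul_sum]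
        refine Finset.sum_congr rfl fun g hg => ?_
        obtain ⟨hm, rfl⟩ := mem_monics.1 hg
        conv_lhs => rw [natDegree_eq_sum_primePowers_dvd hm]
        simp only [Nat.cast_sum, Finset.sum_mul, Finset.sum_filter, Nat.cast_ite, Nat.cast_zero,
          ite_mul, zero_mul]
    _ = ∑ i ∈ Finset.range (d + 1), ∑ x ∈ primePowers F i,
          x.1.natDegree * ∑ g ∈ monics F d with x.1 ^ x.2 ∣ g, χ g := by
        rw [Finset.sum_comm]
        refine Finset.sum_congr rfl fun i _ => ?_
        rw [Finset.sum_comm]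
        simp only [Finset.mul_sum, Finset.sum_filter, mul_ite, mul_zero]
    _ = ∑ i ∈ Finset.range (d + 1), mangoldtSum χ i * lCoeff χ (d - i) := by
        refine Finset.sum_congr rfl fun i hi => ?_
        rw [mangoldtSum, Finset.sum_mul]
        refine Finset.sum_congr rfl fun ⟨P, r⟩ hx => ?_
        obtain ⟨hP, -, -, hdeg⟩ := mem_primePowers.1 hx
        have hPr : (P ^ r).natDegree = i := by rw [natDegree_pow, mul_comm, hdeg]
        rw [sum_monics_dvd χ (hP.pow r) (by rw [hPr]; exact Finset.mem_range_succ_iff.1 hi), hPr,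
          map_pow, mul_assoc]

end Newton

section PointCount

theorem card_sq_eq {K : Type*} [Field K] [Fintype K] [DecidableEq K] (hK : ringChar K ≠ 2)
    (φ : K → K) :
    (Nat.card {p : K × K // p.2 ^ 2 = φ p.1} : ℤ) =
      Fintype.card K + ∑ x, quadraticChar K (φ x) := by
  have e : {p : K × K // p.2 ^ 2 = φ p.1} ≃ (x : K) × {y : K // y ^ 2 = φ x} :=
    Equiv.subtypeProdEquivSigmaSubtype fun x y => y ^ 2 = φ x
  have fiber (a : K) : (Fintype.card {y : K // y ^ 2 = a} : ℤ) = quadraticChar K a + 1 := by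
    rw [← quadraticChar_card_sqrts hK a, Set.toFinset_card]
    rfl
  rw [Nat.card_congr e, Nat.card_eq_fintype_card, Fintype.card_sigma, Nat.cast_sum]
  simp only [fiber, Finset.sum_add_distrib, Finset.sum_const, Finset.card_univ, nsmul_eq_mul,
    mul_one]
  ring

variable {F K : Type*} [Field F] [Finite F] [Field K] [Algebra F K]

theorem splits_map_of_natDegree_dvd_finrank [Finite K] {P : F[X]} (hirr : Irreducible P)
    (hdvd : P.natDegree ∣ Module.finrank F K) : (P.map (algebraMap F K)).Splits := by
  have := Fintype.ofFinite K
  have hsplit := (FiniteField.isSplittingField_sub K F).splits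
  have hP := (hirr.natDegree_dvd_iff_dvd_X_pow_card_pow_sub_X).1 hdvd
  rw [← Module.natCard_eq_pow_finrank, Nat.card_eq_fintype_card] at hP
  refine hsplit.of_dvd ?_ (map_dvd (mapRingHom (algebraMap F K)) hP)
  rw [Polynomial.map_ne_zero_iff (algebraMap F K).injective]
  exact FiniteField.X_pow_card_sub_X_ne_zero F Fintype.one_lt_card

open scoped Classical in
theorem card_filter_minpoly_eq [Fintype K] {P : F[X]} (hP : P.Monic) (hirr : Irreducible P)
    (hdvd : P.natDegree ∣ Module.finrank F K) :
    (Finset.univ.filter fun x : K => minpoly F x = P).card = P.natDegree := by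
  rw [← card_rootSet_eq_natDegree (PerfectField.separable_of_irreducible hirr)
    (splits_map_of_natDegree_dvd_finrank hirr hdvd), ← Set.toFinset_card]
  congr 1
  ext x
  rw [Finset.mem_filter_univ, Set.mem_toFinset, mem_rootSet_of_ne hP.ne_zero]
  exact ⟨fun h => h ▸ minpoly.aeval F x,
    fun h => (minpoly.eq_of_irreducible_of_monic hirr h hP).symm⟩

theorem minpoly_mem_primePowers [Finite K] (x : K) :
    (minpoly F x, Module.finrank F K / (minpoly F x).natDegree) ∈
      primePowers F (Module.finrank F K) := by
  have hx : IsIntegral F x := Algebra.IsIntegral.isIntegral x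
  have hdvd : (minpoly F x).natDegree ∣ Module.finrank F K := minpoly.degree_dvd hx
  exact mem_primePowers.2 ⟨minpoly.monic hx, minpoly.irreducible hx,
    Nat.div_pos (Nat.le_of_dvd Module.finrank_pos hdvd) (minpoly.natDegree_pos hx),
    Nat.mul_div_cancel' hdvd⟩

theorem sum_minpoly [Fintype K] {A : Type*} [CommRing A] (χ : F[X] →* A) :
    ∑ x : K, χ (minpoly F x) ^ (Module.finrank F K / (minpoly F x).natDegree) =
      mangoldtSum χ (Module.finrank F K) := by
  classical
  rw [mangoldtSum,
    ← Finset.sum_fiberwise_of_maps_to fun (x : K) _ => minpoly_mem_primePowers (F := F) x]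
  refine Finset.sum_congr rfl fun ⟨P, r⟩ hPr => ?_
  obtain ⟨hP, hirr, -, hdeg⟩ := mem_primePowers.1 hPr
  have hr : Module.finrank F K / P.natDegree = r := by
    rw [← hdeg, Nat.mul_div_cancel_left r hirr.natDegree_pos]
  have fiber : (Finset.univ.filter fun x : K =>
      (minpoly F x, Module.finrank F K / (minpoly F x).natDegree) = (P, r)) =
      Finset.univ.filter fun x : K => minpoly F x = P := by
    ext x
    simp only [Finset.mem_filter_univ, Prod.mk.injEq, and_iff_left_iff_imp]
    rintro rfl
    exact hr
  rw [fiber, ← card_filter_minpoly_eq (K := K) hP hirr ⟨r, hdeg.symm⟩, ← nsmul_eq_mul,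
    ← Finset.sum_const]
  refine Finset.sum_congr rfl fun x hx => ?_
  rw [(Finset.mem_filter_univ _).1 hx, hr]

end PointCount

section QuadraticDirichletCharacter

variable {F K : Type*} [Field F] [Fintype F] [DecidableEq F] [Field K] [Fintype K] [Algebra F K]

variable (F) in
/-- The quadratic Dirichlet character modulo `f`. -/
noncomputable abbrev quadraticDirichletChar (f : F[X]) [Module.Finite F (AdjoinRoot f)] :
    F[X] →* ℤ := dirichletChar (quadraticNormChar F (AdjoinRoot f))

theorem quadraticDirichletChar_apply {f : F[X]} [Module.Finite F (AdjoinRoot f)] (hf : f.Monic)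
    (g : F[X]) : quadraticDirichletChar F f g = quadraticChar F (f.resultant g) := by
  rw [dirichletChar_apply, quadraticNormChar_apply, norm_adjoinRoot_mk hf]

-- Since `-1` is a square, reciprocity holds without a sign.
theorem quadraticChar_aeval [DecidableEq K] (hF : ringChar F ≠ 2) (hneg : quadraticChar F (-1) = 1)
    {f : F[X]} (hf : f.Monic) [Module.Finite F (AdjoinRoot f)] (x : K) :
    quadraticChar K (aeval x f) = quadraticDirichletChar F f (minpoly F x) ^
      (Module.finrank F K / (minpoly F x).natDegree) := by
  rw [quadraticChar_eq_quadraticNormChar hF, quadraticNormChar_apply, norm_aeval, map_pow,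
    quadraticDirichletChar_apply hf, resultant_comm, map_mul, map_pow, hneg, one_pow, one_mul]

theorem card_sq_eq_aeval (hF : ringChar F ≠ 2) (hneg : quadraticChar F (-1) = 1) {f : F[X]}
    (hf : f.Monic) [Module.Finite F (AdjoinRoot f)] :
    (Nat.card {p : K × K // p.2 ^ 2 = aeval p.1 f} : ℤ) =
      Fintype.card K + mangoldtSum (quadraticDirichletChar F f) (Module.finrank F K) := by
  classical
  have hK : ringChar K ≠ 2 := by rwa [← Algebra.ringChar_eq F K]
  rw [card_sq_eq hK fun x => aeval x f, ← sum_minpoly]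
  simp only [quadraticChar_aeval hF hneg hf]

end QuadraticDirichletCharacter

section LogDerivative

open PowerSeries (derivative mk)

variable {A : Type*} [CommRing A]

theorem derivative_prod_one_sub (s : Multiset A) :
    derivative A (s.map fun a => 1 - PowerSeries.C a * PowerSeries.X).prod =
      -mk (fun n => (s.map (· ^ (n + 1))).sum) *
        (s.map fun a => 1 - PowerSeries.C a * PowerSeries.X).prod := by
  induction s using Multiset.induction_on with
  | empty =>
    have hzero : mk (fun _ => (0 : A)) = 0 := rfl
    simp [hzero]
  | cons a s ih =>
    have geometric : mk (fun n => a ^ (n + 1)) * (1 - PowerSeries.C a * PowerSeries.X) =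
        PowerSeries.C a := by
      ext n
      rw [mul_sub, mul_one, ← mul_assoc]
      cases n with
      | zero => simp
      | succ n => simp [PowerSeries.coeff_succ_mul_X, pow_succ]
    have hadd : mk (fun n => ((a ::ₘ s).map (· ^ (n + 1))).sum) =
        mk (fun n => a ^ (n + 1)) + mk (fun n => (s.map (· ^ (n + 1))).sum) := by
      ext n
      simp
    have hlinear : derivative A (1 - PowerSeries.C a * PowerSeries.X) = -PowerSeries.C a := by
      simp [PowerSeries.derivative_C]
    rw [Multiset.map_cons, Multiset.prod_cons, Derivation.leibniz, ih, hadd, hlinear, smul_eq_mul,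
      smul_eq_mul]
    linear_combination (s.map fun a => 1 - PowerSeries.C a * PowerSeries.X).prod * geometric

theorem reverse_multiset_prod_X_sub_C [IsDomain A] (s : Multiset A) :
    (s.map (X - C ·)).prod.reverse = (s.map fun a => 1 - C a * X).prod := by
  induction s using Multiset.induction_on with
  | empty => simpa using reverse_C (1 : A)
  | cons a s ih =>
    have hlinear : (X - C a).reverse = 1 - C a * X := by
      ext n
      rw [coeff_reverse, natDegree_X_sub_C]
      match n with
      | 0 => simp [revAt_le]
      | 1 => simp [revAt_le, coeff_one]
      | n + 2 =>
        rw [revAt_eq_self_of_lt (by lia)]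
        simp [coeff_X, coeff_one]
    rw [Multiset.map_cons, Multiset.prod_cons, reverse_mul_of_domain, ih, hlinear,
      Multiset.map_cons, Multiset.prod_cons]

theorem coe_reverse_eq_prod_roots [IsDomain A] {P : A[X]} (hP : P.Monic) (hsplit : P.Splits) :
    (P.reverse : PowerSeries A) =
      (P.roots.map fun a => 1 - PowerSeries.C a * PowerSeries.X).prod := by
  conv_lhs => rw [hsplit.eq_prod_roots_of_monic hP, reverse_multiset_prod_X_sub_C]
  rw [← coeToPowerSeries.ringHom_apply, map_multiset_prod, Multiset.map_map]
  congr 1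
  refine Multiset.map_congr rfl fun a _ => ?_
  simp

variable {F : Type*} [Field F] [Finite F]

theorem derivative_mk_lCoeff (χ : F[X] →* A) : derivative A (mk (lCoeff χ)) =
    mk (fun n => mangoldtSum χ (n + 1)) * mk (lCoeff χ) := by
  ext n
  have hzero : mangoldtSum χ 0 = 0 := Finset.sum_eq_zero fun ⟨P, r⟩ hx => by
    obtain ⟨-, hirr, hr, hdeg⟩ := mem_primePowers.1 hx
    exact absurd hdeg (Nat.mul_pos hirr.natDegree_pos hr).ne'
  have h := natCast_mul_lCoeff χ (n + 1)
  rw [Finset.sum_range_succ', hzero, zero_mul, add_zero] at h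
  simp only [Nat.add_sub_add_right] at h
  rw [PowerSeries.coeff_derivative, PowerSeries.coeff_mul, PowerSeries.coeff_mk,
    Finset.Nat.sum_antidiagonal_eq_sum_range_succ_mk]
  simp only [PowerSeries.coeff_mk]
  rw [← h, mul_comm]
  push_cast
  rfl

theorem mangoldtSum_eq_neg_sum_pow_roots [IsDomain A] {χ : F[X] →* A} {P : A[X]} (hP : P.Monic)
    (hsplit : P.Splits) (hχ : ∀ d, lCoeff χ d = P.reverse.coeff d) {n : ℕ} (hn : 0 < n) :
    mangoldtSum χ n = -(P.roots.map (· ^ n)).sum := by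
  have hL : mk (lCoeff χ) = (P.reverse : PowerSeries A) := by
    ext d
    rw [PowerSeries.coeff_mk, hχ, Polynomial.coeff_coe]
  have hL0 : mk (lCoeff χ) ≠ 0 := by
    simp [hL, hP.ne_zero]
  have h := derivative_mk_lCoeff χ
  have h' := derivative_prod_one_sub P.roots
  rw [← coe_reverse_eq_prod_roots hP hsplit, ← hL, h] at h'
  obtain ⟨m, rfl⟩ : ∃ m, n = m + 1 := ⟨n - 1, by lia⟩
  simpa using congrArg (PowerSeries.coeff m) (mul_right_cancel₀ hL0 h')

section Map

variable {B : Type*} [CommRing B] (φ : A →+* B) (χ : F[X] →* A)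

theorem lCoeff_map (d : ℕ) : lCoeff (φ.toMonoidHom.comp χ) d = φ (lCoeff χ d) := by
  simp [lCoeff]

theorem mangoldtSum_map (n : ℕ) :
    mangoldtSum (φ.toMonoidHom.comp χ) n = φ (mangoldtSum χ n) := by
  simp [mangoldtSum]

end Map

end LogDerivative

section Residues

variable {R : Type*} [CommRing R] {n : ℕ}

/-- The polynomial with a given list of coefficients, constant coefficient first. -/
noncomputable def ofCoeffs (l : List R) : R[X] := l.foldr (fun c p => C c + X * p) 0

/-- Multiplication by `X` modulo `X ^ (n + 1) + ∑ v i * X ^ i`, on coefficient vectors. -/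
def mulXMod (v r : Fin (n + 1) → R) : Fin (n + 1) → R :=
  (Fin.cons 0 (Fin.init r) : Fin (n + 1) → R) - r (Fin.last n) • v

/-- The coefficient vector of `ofCoeffs l` modulo `X ^ (n + 1) + ∑ v i * X ^ i`, computed by
Horner's scheme. -/
def residueCoeffs (v : Fin (n + 1) → R) (l : List R) : Fin (n + 1) → R :=
  l.foldr (fun c r => Fin.cons c 0 + mulXMod v r) 0

/-- The matrix whose rows are the coefficient vectors of `X ^ i * ofCoeffs l` modulo
`X ^ (n + 1) + ∑ v i * X ^ i`; its determinant is the norm of the residue class. -/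
def residueMatrix (v : Fin (n + 1) → R) (l : List R) : Matrix (Fin (n + 1)) (Fin (n + 1)) R :=
  Matrix.of fun i => (mulXMod v)^[i] (residueCoeffs v l)

section Basis

variable {S : Type*} [CommRing S] [Algebra R S] {x : S} {b : Module.Basis (Fin (n + 1)) R S}
  (hb : ∀ i, b i = x ^ (i : ℕ)) {v : Fin (n + 1) → R}

include hb

theorem equivFun_algebraMap (c : R) : b.equivFun (algebraMap R S c) = Fin.cons c 0 := by
  rw [← LinearEquiv.eq_symm_apply, b.equivFun_symm_apply, Fin.sum_univ_succ]
  simp [hb, Algebra.algebraMap_eq_smul_one]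

variable (hx : x ^ (n + 1) + ∑ i, v i • x ^ (i : ℕ) = 0)

include hx

theorem equivFun_mul (y : S) : b.equivFun (x * y) = mulXMod v (b.equivFun y) := by
  obtain ⟨r, rfl⟩ := b.equivFun.symm.surjective y
  rw [← LinearEquiv.eq_symm_apply, LinearEquiv.apply_symm_apply]
  simp only [b.equivFun_symm_apply, hb, mulXMod, Pi.sub_apply, Pi.smul_apply, sub_smul,
    Finset.sum_sub_distrib, smul_assoc, ← Finset.smul_sum, eq_neg_of_add_eq_zero_right hx]
  rw [Fin.sum_univ_castSucc, Fin.sum_univ_succ]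
  simp only [Fin.cons_zero, Fin.cons_succ, Fin.init, Fin.val_castSucc, Fin.val_last, Fin.val_succ,
    zero_smul, zero_add, smul_neg, sub_neg_eq_add, mul_add, Finset.mul_sum, mul_smul_comm,
    pow_succ']

theorem equivFun_pow_mul (k : ℕ) (y : S) :
    b.equivFun (x ^ k * y) = (mulXMod v)^[k] (b.equivFun y) := by
  induction k with
  | zero => simp
  | succ k ih => rw [pow_succ', mul_assoc, equivFun_mul hb hx, ih, Function.iterate_succ_apply']

theorem equivFun_aeval_ofCoeffs (l : List R) :
    b.equivFun (aeval x (ofCoeffs l)) = residueCoeffs v l := by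
  induction l with
  | nil => simp [ofCoeffs, residueCoeffs]
  | cons c l ih =>
    simp only [ofCoeffs, residueCoeffs, List.foldr_cons] at ih ⊢
    rw [map_add, map_mul, aeval_C, aeval_X, map_add, equivFun_algebraMap hb, equivFun_mul hb hx,
      ih]

theorem norm_aeval_ofCoeffs (l : List R) :
    Algebra.norm R (aeval x (ofCoeffs l)) = (residueMatrix v l).det := by
  rw [Algebra.norm_eq_matrix_det b, ← Matrix.det_transpose]
  congr 1
  ext i j
  rw [Matrix.transpose_apply, Algebra.leftMulMatrix_eq_repr_mul, mul_comm, hb, residueMatrix,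
    Matrix.of_apply, ← equivFun_aeval_ofCoeffs hb hx, ← equivFun_pow_mul hb hx]
  rfl

end Basis

theorem degree_sum_monomial_lt {d : ℕ} (v : Fin d → R) :
    (∑ i : Fin d, monomial i (v i)).degree < d := by
  simpa only [C_mul_X_pow_eq_monomial] using degree_sum_fin_lt v

theorem monic_X_pow_add_sum_monomial {d : ℕ} (v : Fin d → R) :
    (X ^ d + ∑ i : Fin d, monomial i (v i)).Monic :=
  monic_X_pow_add (degree_sum_monomial_lt v)

theorem natDegree_X_pow_add_sum_monomial [Nontrivial R] {d : ℕ} (v : Fin d → R) :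
    (X ^ d + ∑ i : Fin d, monomial i (v i)).natDegree = d := by
  rw [natDegree_add_eq_left_of_degree_lt, natDegree_X_pow]
  rw [degree_X_pow]
  exact degree_sum_monomial_lt v

theorem norm_mk_ofCoeffs [Nontrivial R] (v : Fin (n + 1) → R) (l : List R) :
    Algebra.norm R (AdjoinRoot.mk (X ^ (n + 1) + ∑ i : Fin (n + 1), monomial i (v i))
      (ofCoeffs l)) = (residueMatrix v l).det := by
  have hm := monic_X_pow_add_sum_monomial v
  have hdim : (AdjoinRoot.powerBasis' hm).dim = n + 1 := natDegree_X_pow_add_sum_monomial v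
  obtain ⟨g, hg⟩ : ∃ g, g = X ^ (n + 1) + ∑ i : Fin (n + 1), monomial i (v i) := ⟨_, rfl⟩
  have hx : AdjoinRoot.root g ^ (n + 1) + ∑ i, v i • AdjoinRoot.root g ^ (i : ℕ) = 0 := by
    have h : aeval (AdjoinRoot.root g) (X ^ (n + 1) + ∑ i : Fin (n + 1), monomial i (v i)) = 0 := by
      rw [← hg, AdjoinRoot.aeval_eq, AdjoinRoot.mk_self]
    simpa [Algebra.smul_def, ← C_mul_X_pow_eq_monomial] using h
  subst hg
  rw [← AdjoinRoot.aeval_eq]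
  refine norm_aeval_ofCoeffs (b := (AdjoinRoot.powerBasis' hm).basis.reindex (finCongr hdim))
    (fun i => ?_) hx l
  rw [Module.Basis.reindex_apply, PowerBasis.coe_basis]
  rfl

end Residues

section CoefficientSums

variable {F : Type*} [Field F] [Fintype F] [DecidableEq F]

theorem lCoeff_quadraticDirichletChar (hneg : quadraticChar F (-1) = 1) {l : List F}
    (hl : (ofCoeffs l).Monic) [Module.Finite F (AdjoinRoot (ofCoeffs l))] (n : ℕ) :
    lCoeff (quadraticDirichletChar F (ofCoeffs l)) (n + 1) =
      ∑ v : Fin (n + 1) → F, quadraticChar F (residueMatrix v l).det := by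
  rw [lCoeff, sum_monics_eq_sum_coeffs]
  refine Fintype.sum_congr _ _ fun v => ?_
  rw [quadraticDirichletChar_apply hl, resultant_comm, map_mul, map_pow, hneg, one_pow, one_mul,
    ← norm_adjoinRoot_mk (monic_X_pow_add_sum_monomial v), norm_mk_ofCoeffs]

end CoefficientSums

section OddDegree

theorem finrank_adjoinRoot {F : Type*} [Field F] {f : F[X]} (hf : f.Monic) :
    Module.finrank F (AdjoinRoot f) = f.natDegree := by
  rw [(AdjoinRoot.powerBasis' hf).finrank, AdjoinRoot.powerBasis'_dim]

variable {F : Type*} [Field F] [Fintype F] [DecidableEq F]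

theorem isQuadratic_quadraticNormChar (R : Type*) [CommRing R] [Algebra F R] [Module.Finite F R] :
    (quadraticNormChar F R).IsQuadratic := fun _ => quadraticChar_isQuadratic F _

theorem quadraticNormChar_algebraMap_of_odd {R : Type*} [CommRing R] [Algebra F R]
    [Module.Finite F R] (hR : Odd (Module.finrank F R)) (c : F) :
    quadraticNormChar F R (algebraMap F R c) = quadraticChar F c := by
  rw [quadraticNormChar_apply, Algebra.norm_algebraMap, map_pow]
  rcases quadraticChar_isQuadratic F c with h | h | h <;> simp [h, hR.pos.ne', hR.neg_one_pow]

theorem quadraticNormChar_ne_one (hF : ringChar F ≠ 2) {R : Type*} [CommRing R] [Algebra F R]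
    [Module.Finite F R] (hR : Odd (Module.finrank F R)) : quadraticNormChar F R ≠ 1 := by
  intro h
  obtain ⟨c, hc⟩ := quadraticChar_exists_neg_one hF
  have hc0 : c ≠ 0 := by rintro rfl; simp at hc
  rw [← quadraticNormChar_algebraMap_of_odd hR, h,
    MulChar.one_apply ((IsUnit.mk0 c hc0).map _)] at hc
  lia

variable (hF : ringChar F ≠ 2) {f : F[X]} (hf : f.Monic)
  [Module.Finite F (AdjoinRoot f)]

include hF hf

theorem lCoeff_quadraticDirichletChar_eq_zero (hodd : Odd f.natDegree) {d : ℕ}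
    (hd : f.natDegree ≤ d) : lCoeff (quadraticDirichletChar F f) d = 0 := by
  have := Module.finite_of_finite F (M := AdjoinRoot f)
  rw [← finrank_adjoinRoot hf] at hodd
  exact lCoeff_eq_zero hf (quadraticNormChar_ne_one hF hodd) hd

theorem lCoeff_quadraticDirichletChar_symm (hsq : Squarefree f) {g : ℕ}
    (hg : f.natDegree = 2 * g + 1) (hmid : lCoeff (quadraticDirichletChar F f) g ≠ 0) {e : ℕ}
    (he : e ≤ g) : lCoeff (quadraticDirichletChar F f) (2 * g - e) =
      Fintype.card F ^ (g - e) * lCoeff (quadraticDirichletChar F f) e := by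
  have := Module.finite_of_finite F (M := AdjoinRoot f)
  have hodd : Odd (Module.finrank F (AdjoinRoot f)) := ⟨g, (finrank_adjoinRoot hf).trans hg⟩
  exact lCoeff_functional_equation hF hf hg (isPrimitive_quadraticNormChar hF hf hsq)
    (isQuadratic_quadraticNormChar _) (quadraticNormChar_algebraMap_of_odd hodd) hmid he

end OddDegree

section Curve

/-- The coefficients of the right-hand side of the curve `y² = x⁹ + x⁶ + 2x⁵ + x` over the field
with five elements, constant coefficient first. -/
def curveCoeffs : List (ZMod 5) := [0, 1, 0, 0, 0, 2, 1, 0, 0, 1]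

/-- The right-hand side of the curve `y² = x⁹ + x⁶ + 2x⁵ + x` over the field with five elements. -/
noncomputable def curvePoly : (ZMod 5)[X] := ofCoeffs curveCoeffs

theorem curvePoly_eq : curvePoly = X ^ 9 + X ^ 6 + 2 * X ^ 5 + X := by
  simp only [curvePoly, curveCoeffs, ofCoeffs, List.foldr_cons, List.foldr_nil, map_zero, map_one,
    map_ofNat]
  ring

theorem curvePoly_monic : curvePoly.Monic := by
  rw [curvePoly_eq]
  monicity!

instance : Fact (Nat.Prime 5) := ⟨by norm_num⟩

instance : Module.Finite (ZMod 5) (AdjoinRoot curvePoly) := curvePoly_monic.finite_adjoinRoot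

theorem curvePoly_natDegree : curvePoly.natDegree = 9 := by
  rw [curvePoly_eq]
  compute_degree!

-- The Bézout coefficients come from the extended Euclidean algorithm.
theorem curvePoly_squarefree : Squarefree curvePoly := by
  have h5 : (5 : (ZMod 5)[X]) = 0 := CharP.cast_eq_zero _ 5
  have hder : derivative curvePoly = 4 * X ^ 8 + X ^ 5 + 1 := by
    simp only [curvePoly_eq, derivative_X_pow, derivative_add, derivative_mul, derivative_X,
      derivative_ofNat, map_natCast]
    linear_combination (X ^ 8 + X ^ 5 + 2 * X ^ 4) * h5
  refine Separable.squarefree ⟨2 + 3 * X ^ 2 + X ^ 3 + 3 * X ^ 4 + 2 * X ^ 6 + 2 * X ^ 7,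
    1 + 3 * X + 2 * X ^ 3 + 4 * X ^ 4 + 2 * X ^ 5 + 2 * X ^ 7 + 2 * X ^ 8, ?_⟩
  rw [hder, curvePoly_eq]
  linear_combination (X + X ^ 3 + X ^ 4 + 2 * X ^ 5 + X ^ 6 + 2 * X ^ 7 + 3 * X ^ 8 + 5 * X ^ 9 +
    X ^ 10 + 3 * X ^ 11 + 5 * X ^ 12 + 3 * X ^ 13 + 2 * X ^ 15 + 2 * X ^ 16) * h5

theorem ringChar_zmod_five_ne_two : ringChar (ZMod 5) ≠ 2 := by
  rw [ZMod.ringChar_zmod_n]; norm_num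

theorem quadraticChar_zmod_five_neg_one : quadraticChar (ZMod 5) (-1) = 1 := by decide

/-- The quadratic Dirichlet character attached to the curve. -/
noncomputable abbrev curveChar : (ZMod 5)[X] →* ℤ := quadraticDirichletChar (ZMod 5) curvePoly

theorem lCoeff_curveChar (n : ℕ) : lCoeff curveChar (n + 1) =
    ∑ v : Fin (n + 1) → ZMod 5, quadraticChar (ZMod 5) (residueMatrix v curveCoeffs).det :=
  have : Module.Finite (ZMod 5) (AdjoinRoot (ofCoeffs curveCoeffs)) :=
    curvePoly_monic.finite_adjoinRoot
  lCoeff_quadraticDirichletChar quadraticChar_zmod_five_neg_one curvePoly_monic n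

theorem lCoeff_curveChar_one : lCoeff curveChar 1 = -1 := by
  rw [lCoeff_curveChar]
  decide +kernel

theorem lCoeff_curveChar_two : lCoeff curveChar 2 = 2 := by
  rw [lCoeff_curveChar]
  decide +kernel

theorem lCoeff_curveChar_three : lCoeff curveChar 3 = -4 := by
  simp only [lCoeff_curveChar 2, Nat.reduceAdd, Matrix.det_fin_three]
  decide +kernel

theorem lCoeff_curveChar_four : lCoeff curveChar 4 = 16 := by
  simp only [lCoeff_curveChar 3, Nat.reduceAdd, Matrix.det_succ_row_zero (n := 3),
    Matrix.det_fin_three, Fin.sum_univ_four]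
  decide +kernel

theorem lCoeff_curveChar_symm {e : ℕ} (he : e ≤ 4) :
    lCoeff curveChar (8 - e) = 5 ^ (4 - e) * lCoeff curveChar e := by
  simpa using lCoeff_quadraticDirichletChar_symm ringChar_zmod_five_ne_two curvePoly_monic
    curvePoly_squarefree (g := 4) curvePoly_natDegree (by simp [lCoeff_curveChar_four]) he

theorem P5_natDegree : P5.natDegree = 8 := by
  unfold P5
  compute_degree!

theorem P5_monic : P5.Monic := by
  unfold P5
  monicity!

theorem lCoeff_curveChar_eq_coeff_reverse (d : ℕ) :
    ((lCoeff curveChar d : ℤ) : ℂ) = P5.reverse.coeff d := by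
  rw [coeff_reverse, P5_natDegree]
  rcases le_or_gt 9 d with hd | hd
  · rw [lCoeff_quadraticDirichletChar_eq_zero ringChar_zmod_five_ne_two curvePoly_monic
      (curvePoly_natDegree ▸ by decide) (curvePoly_natDegree.trans_le hd), revAt_eq_self_of_lt hd,
      coeff_eq_zero_of_natDegree_lt (P5_natDegree.trans_lt hd), Int.cast_zero]
  · rw [revAt_le (Nat.le_of_lt_succ hd)]
    have h5 := lCoeff_curveChar_symm (e := 3) (by decide)
    have h6 := lCoeff_curveChar_symm (e := 2) (by decide)
    have h7 := lCoeff_curveChar_symm (e := 1) (by decide)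
    have h8 := lCoeff_curveChar_symm (e := 0) (by decide)
    norm_num at h5 h6 h7 h8
    interval_cases d <;> simp [P5, coeff_X, coeff_ofNat_mul, coeff_ofNat_zero,
      coeff_ofNat_succ, coeff_X_pow, lCoeff_zero, lCoeff_curveChar_one, lCoeff_curveChar_two,
      lCoeff_curveChar_three, lCoeff_curveChar_four, *]

theorem mangoldtSum_curveChar {n : ℕ} (hn : 0 < n) :
    ((mangoldtSum curveChar n : ℤ) : ℂ) = -(P5.roots.map (· ^ n)).sum := by
  have h := mangoldtSum_map (Int.castRingHom ℂ) curveChar n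
  rw [mangoldtSum_eq_neg_sum_pow_roots P5_monic (IsAlgClosed.splits P5) (fun d => ?_) hn] at h
  · exact h.symm
  · rw [lCoeff_map, ← lCoeff_curveChar_eq_coeff_reverse, eq_intCast]

theorem card_curve {K : Type*} [Field K] [Fintype K] [Algebra (ZMod 5) K] :
    (Nat.card {p : K × K // p.2 ^ 2 = p.1 ^ 9 + p.1 ^ 6 + 2 * p.1 ^ 5 + p.1} : ℤ) =
      Fintype.card K + mangoldtSum curveChar (Module.finrank (ZMod 5) K) := by
  have haeval (x : K) : aeval x curvePoly = x ^ 9 + x ^ 6 + 2 * x ^ 5 + x := by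
    have h2 : aeval x (2 : (ZMod 5)[X]) = 2 := map_ofNat _ 2
    simp only [curvePoly_eq, map_add, map_mul, map_pow, aeval_X, h2]
  simpa only [haeval] using card_sq_eq_aeval (K := K) ringChar_zmod_five_ne_two
    quadraticChar_zmod_five_neg_one curvePoly_monic

end Curve

end QuadraticLFunction

/-- For every `n ≥ 1` and every finite field `F` with `5 ^ n` elements, the number of pairs
`(x, y) ∈ F × F` with `y² = x⁹ + x⁶ + 2x⁵ + x` equals `5 ^ n` minus the sum of the `n`-th
powers of the complex roots (with multiplicity) of `P5`. -/
theorem point_count_F5 (n : ℕ) (hn : 0 < n) (F : Type) [Field F] [Fintype F]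
    (hF : Fintype.card F = 5 ^ n) :
    ((Nat.card {p : F × F // p.2 ^ 2 = p.1 ^ 9 + p.1 ^ 6 + 2 * p.1 ^ 5 + p.1} : ℕ) : ℂ)
      = 5 ^ n - (P5.roots.map (· ^ n)).sum := by
  have : CharP F 5 := charP_of_card_eq_prime_pow hF
  let _ : Algebra (ZMod 5) F := ZMod.algebra F 5
  have hrank : Module.finrank (ZMod 5) F = n := by
    have h := Module.card_eq_pow_finrank (K := ZMod 5) (V := F)
    rw [hF, ZMod.card] at h
    exact (Nat.pow_right_injective (by decide) h).symm
  have hcard := congrArg (Int.cast : ℤ → ℂ) (QuadraticLFunction.card_curve (K := F))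
  rw [hrank, hF] at hcard
  push_cast at hcard
  rw [hcard, QuadraticLFunction.mangoldtSum_curveChar hn, sub_eq_add_neg]
end

section
/- The polynomial P₃(T) = T⁸ − T⁷ + 2T⁶ − 4T⁵ − 2T⁴ − 12T³ + 18T² − 27T + 81 is irreducible over ℚ. -/
open Polynomial

/-- The Weil polynomial `P₃` viewed as a polynomial with rational coefficients. -/
noncomputable def P3Q : Polynomial ℚ :=
  X ^ 8 - X ^ 7 + 2 * X ^ 6 - 4 * X ^ 5 - 2 * X ^ 4 - 12 * X ^ 3 + 18 * X ^ 2 - 27 * X + 81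

/-!
A polynomial over `ℤ` is irreducible as soon as it takes a prime value at an integer `n` at distance
more than `1` from all its complex roots: one of the two factors would take a value `±1` at `n`,
whereas a nonconstant factor takes there the value `c * ∏ (n - z)`, of absolute value greater
than `1`. By Cauchy's bound, the roots of `P₃` lie in the disc `|z| < 3`, and `P₃(-8) = 19529129`
is prime.
-/

theorem norm_lt_of_isRoot_of_sum_lt {K : Type*} [NormedDivisionRing K] {p : K[X]} {z : K} {r : ℝ}
    (hr : 0 < r)
    (hsum : ∑ i ∈ Finset.range p.natDegree, ‖p.coeff i‖ * r ^ i
      < ‖p.leadingCoeff‖ * r ^ p.natDegree)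
    (hz : p.IsRoot z) : ‖z‖ < r := by
  by_contra! hrz
  have hratio : 1 ≤ ‖z‖ / r := (one_le_div hr).2 hrz
  have hscale (i : ℕ) : r ^ i * (‖z‖ / r) ^ i = ‖z‖ ^ i := by
    rw [← mul_pow, mul_div_cancel₀ _ hr.ne']
  have hlead : p.leadingCoeff * z ^ p.natDegree =
      -∑ i ∈ Finset.range p.natDegree, p.coeff i * z ^ i := by
    rw [IsRoot.def, eval_eq_sum_range, Finset.sum_range_succ] at hz
    exact eq_neg_of_add_eq_zero_right hz
  refine lt_irrefl (‖p.leadingCoeff‖ * ‖z‖ ^ p.natDegree) ?_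
  calc ‖p.leadingCoeff‖ * ‖z‖ ^ p.natDegree
      = ‖∑ i ∈ Finset.range p.natDegree, p.coeff i * z ^ i‖ := by
        rw [← norm_pow, ← norm_mul, hlead, norm_neg]
    _ ≤ ∑ i ∈ Finset.range p.natDegree, ‖p.coeff i‖ * ‖z‖ ^ i :=
        norm_sum_le_of_le _ fun i _ ↦ by rw [norm_mul, norm_pow]
    _ = ∑ i ∈ Finset.range p.natDegree, ‖p.coeff i‖ * r ^ i * (‖z‖ / r) ^ i := by
        simp only [mul_assoc, hscale]
    _ ≤ ∑ i ∈ Finset.range p.natDegree, ‖p.coeff i‖ * r ^ i * (‖z‖ / r) ^ p.natDegree := by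
        gcongr with i hi
        exact (Finset.mem_range.1 hi).le
    _ = (∑ i ∈ Finset.range p.natDegree, ‖p.coeff i‖ * r ^ i) * (‖z‖ / r) ^ p.natDegree :=
        (Finset.sum_mul ..).symm
    _ < ‖p.leadingCoeff‖ * r ^ p.natDegree * (‖z‖ / r) ^ p.natDegree := by gcongr
    _ = ‖p.leadingCoeff‖ * ‖z‖ ^ p.natDegree := by rw [mul_assoc, hscale]

theorem one_lt_norm_eval_of_splits {K : Type*} [NormedField K] {p : K[X]} (hp : p.Splits)
    (hdeg : p.natDegree ≠ 0) (hlead : 1 ≤ ‖p.leadingCoeff‖) {x : K}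
    (hroots : ∀ z, p.IsRoot z → 1 < ‖x - z‖) : 1 < ‖p.eval x‖ := by
  have hne : p.roots ≠ 0 := by
    rwa [Ne, ← Multiset.card_eq_zero, ← hp.natDegree_eq_card_roots]
  have hprod : 1 < (p.roots.map fun z ↦ ‖x - z‖).prod := by
    simpa using Multiset.prod_map_lt_prod_map hne (fun _ ↦ (1 : ℝ)) _ (fun _ _ ↦ one_pos)
      fun z hz ↦ hroots z (isRoot_of_mem_roots hz)
  calc 1 < (p.roots.map fun z ↦ ‖x - z‖).prod := hprod
    _ ≤ ‖p.leadingCoeff‖ * (p.roots.map fun z ↦ ‖x - z‖).prod :=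
        le_mul_of_one_le_left (by positivity) hlead
    _ = ‖p.eval x‖ := by
        rw [hp.eval_eq_prod_roots, norm_mul, ← normHom_apply (Multiset.prod _), map_multiset_prod,
          Multiset.map_map]
        rfl

section PrimeValue

variable {f : ℤ[X]} {n : ℤ}

theorem one_lt_abs_eval_of_natDegree_ne_zero (hdeg : f.natDegree ≠ 0)
    (hroots : ∀ z : ℂ, aeval z f = 0 → 1 < ‖(n : ℂ) - z‖) : 1 < |f.eval n| := by
  have hinj : Function.Injective (algebraMap ℤ ℂ) := Int.cast_injective
  have hlead : 1 ≤ ‖(f.map (algebraMap ℤ ℂ)).leadingCoeff‖ := by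
    have hf : f ≠ 0 := ne_zero_of_natDegree_gt hdeg.pos
    rw [leadingCoeff_map_of_injective hinj, eq_intCast, Complex.norm_intCast]
    exact_mod_cast Int.one_le_abs (leadingCoeff_ne_zero.2 hf)
  have hnorm : 1 < ‖(f.map (algebraMap ℤ ℂ)).eval (n : ℂ)‖ := by
    refine one_lt_norm_eval_of_splits (IsAlgClosed.splits _) ?_ hlead fun z hz ↦ hroots z ?_
    · rwa [natDegree_map_eq_of_injective hinj]
    · rwa [IsRoot.def, eval_map_algebraMap] at hz
  rw [eval_intCast_map, eq_intCast, Complex.norm_intCast, Int.cast_id] at hnorm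
  exact_mod_cast hnorm

theorem isUnit_of_isUnit_eval (hunit : IsUnit (f.eval n))
    (hroots : ∀ z : ℂ, aeval z f = 0 → 1 < ‖(n : ℂ) - z‖) : IsUnit f := by
  have hdeg : f.natDegree = 0 := by
    by_contra hdeg
    exact (one_lt_abs_eval_of_natDegree_ne_zero hdeg hroots).ne' (Int.isUnit_iff_abs_eq.1 hunit)
  rw [eq_C_of_natDegree_eq_zero hdeg] at hunit ⊢
  exact isUnit_C.2 (by simpa using hunit)

theorem irreducible_of_prime_eval (hprime : Prime (f.eval n))
    (hroots : ∀ z : ℂ, aeval z f = 0 → 1 < ‖(n : ℂ) - z‖) : Irreducible f where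
  not_isUnit hf := hprime.not_isUnit (hf.map (evalRingHom n))
  isUnit_or_isUnit := by
    rintro g h rfl
    rw [eval_mul] at hprime
    refine (hprime.irreducible.isUnit_or_isUnit rfl).imp
      (isUnit_of_isUnit_eval · fun z hz ↦ hroots z ?_)
      (isUnit_of_isUnit_eval · fun z hz ↦ hroots z ?_) <;>
    simp [hz]

theorem irreducible_of_prime_eval_of_sum_lt {r : ℝ} (hr : 0 < r)
    (hsum : ∑ i ∈ Finset.range f.natDegree, |(f.coeff i : ℝ)| * r ^ i
      < |(f.leadingCoeff : ℝ)| * r ^ f.natDegree)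
    (hn : r + 1 ≤ |(n : ℝ)|) (hprime : Prime (f.eval n)) : Irreducible f := by
  refine irreducible_of_prime_eval hprime fun z hz ↦ ?_
  have hinj : Function.Injective (algebraMap ℤ ℂ) := Int.cast_injective
  have hzr : ‖z‖ < r := by
    refine norm_lt_of_isRoot_of_sum_lt (p := f.map (algebraMap ℤ ℂ)) hr ?_ ?_
    · rw [natDegree_map_eq_of_injective hinj, leadingCoeff_map_of_injective hinj]
      simpa using hsum
    · rwa [IsRoot.def, eval_map_algebraMap]
  calc 1 ≤ |(n : ℝ)| - r := by linarith
    _ < ‖(n : ℂ)‖ - ‖z‖ := by rw [Complex.norm_intCast]; gcongr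
    _ ≤ ‖(n : ℂ) - z‖ := norm_sub_norm_le _ _

end PrimeValue

/-- The Weil polynomial `P₃` viewed as a polynomial with integer coefficients. -/
noncomputable def P3Z : ℤ[X] :=
  X ^ 8 - X ^ 7 + 2 * X ^ 6 - 4 * X ^ 5 - 2 * X ^ 4 - 12 * X ^ 3 + 18 * X ^ 2 - 27 * X + 81

theorem P3Z_map_intCast : P3Z.map (Int.castRingHom ℚ) = P3Q := by
  simp [P3Z, P3Q]

theorem P3Z_monic : P3Z.Monic := by
  unfold P3Z
  monicity!

theorem P3Z_natDegree : P3Z.natDegree = 8 := by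
  unfold P3Z
  compute_degree!

theorem prime_eval_P3Z : Prime (P3Z.eval (-8)) := by
  have heval : P3Z.eval (-8) = 19529129 := by simp [P3Z]
  rw [heval, Int.prime_iff_natAbs_prime]
  norm_num

theorem P3Z_sum_abs_coeff_lt :
    ∑ i ∈ Finset.range P3Z.natDegree, |(P3Z.coeff i : ℝ)| * 3 ^ i
      < |(P3Z.leadingCoeff : ℝ)| * 3 ^ P3Z.natDegree := by
  rw [P3Z_monic.leadingCoeff, P3Z_natDegree]
  norm_num [Finset.sum_range_succ, P3Z, coeff_X]

theorem P3Z_irreducible : Irreducible P3Z :=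
  irreducible_of_prime_eval_of_sum_lt three_pos P3Z_sum_abs_coeff_lt (by norm_num) prime_eval_P3Z

/-- `P₃(T) = T⁸ − T⁷ + 2T⁶ − 4T⁵ − 2T⁴ − 12T³ + 18T² − 27T + 81` is irreducible over `ℚ`. -/
theorem P3_irreducible : Irreducible P3Q := by
  rw [← P3Z_map_intCast]
  exact (IsPrimitive.Int.irreducible_iff_irreducible_map_cast P3Z_monic.isPrimitive).1
    P3Z_irreducible
end

section
/- If α and β are complex roots of P₅(T) = T⁸ − T⁷ + 2T⁶ − 4T⁵ + 16T⁴ − 20T³ + 50T² − 125T + 625 and α/β is a root of unity (i.e., (α/β)^n = 1 for some positive integer n), then α = β. (Equivalently, the tensor square of the L-polynomial has no nontrivial cyclotomic factors; this certifies that the corresponding ordinary simple abelian fourfold is geometrically simple.) -/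
open Polynomial

/-!
Let `n` be the order of `α / β`. If the `M`-th powers of all roots of `P₅` in fields of
characteristic `q` coincide and do not vanish, then `(α / β) ^ M` reduces to `1` modulo a maximal
ideal above `q`, so its order is a power of `q`, because reduction modulo `q` is injective on roots
of unity of order prime to `q`. Since `P₅ ≡ (T - 1)(T⁷ - 1)` modulo `2` and `P₅ ≡ (T² - T - 1)⁴`
modulo `3`, this applies with `(q, M) = (2, 7)` and, as `T² = T + 1` gives `T⁴ = -1` modulo `3`,
with `(q, M) = (3, 4)`. Hence `n` divides both `2ᵉ · 7` and `3ᵈ · 4`, so `α⁴ = β⁴`.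

The cases `α = -β` and `α² = -β²` are excluded by the quartics satisfied by `α + 5 / α` and
`α² + 25 / α²`, neither of which has two opposite roots.
-/

universe u

section Reduction

theorem isPrimitiveRoot_map_of_natCast_ne_zero {R k : Type*} [CommRing R] [IsDomain R]
    [CommRing k] [IsDomain k] (φ : R →+* k) {n : ℕ} {ζ : R} (hζ : IsPrimitiveRoot ζ n)
    (hn : (n : k) ≠ 0) : IsPrimitiveRoot (φ ζ) n := by
  have : NeZero (n : k) := ⟨hn⟩
  have hn_pos : 0 < n := Nat.pos_of_ne_zero fun h ↦ hn (by simp [h])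
  rw [← isRoot_cyclotomic_iff, ← map_cyclotomic n φ]
  exact (hζ.isRoot_cyclotomic hn_pos).map

theorem exists_orderOf_dvd_pow_mul_of_map_pow_eq_one {R k : Type*} [CommRing R] [IsDomain R]
    [CommRing k] [IsDomain k] {q : ℕ} [CharP k q] (φ : R →+* k) {ζ : R}
    (hζ : IsOfFinOrder ζ) {M : ℕ} (hM : φ ζ ^ M = 1) : ∃ e : ℕ, orderOf ζ ∣ q ^ e * M := by
  obtain ⟨e, m, hqm, hn⟩ :=
    Nat.exists_eq_pow_mul_and_not_dvd hζ.orderOf_pos.ne' q (CharP.char_ne_one k q)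
  have hm : IsPrimitiveRoot (φ (ζ ^ q ^ e)) m :=
    isPrimitiveRoot_map_of_natCast_ne_zero φ
      ((IsPrimitiveRoot.orderOf ζ).pow hζ.orderOf_pos hn) (by rwa [Ne, CharP.cast_eq_zero_iff k q])
  have hmM : m ∣ M := hm.dvd_of_pow_eq_one M <| by rw [map_pow, pow_right_comm, hM, one_pow]
  exact ⟨e, hn ▸ Nat.mul_dvd_mul_left _ hmM⟩

theorem exists_isMaximal_charP_quotient (R : Type*) [CommRing R] [CharZero R]
    [Algebra.IsIntegral ℤ R] (q : ℕ) [Fact q.Prime] :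
    ∃ m : Ideal R, m.IsMaximal ∧ CharP (R ⧸ m) q := by
  obtain ⟨m, hm, _⟩ :=
    Ideal.exists_maximal_ideal_liesOver_of_isIntegral (S := R) (Ideal.span {(q : ℤ)})
  refine ⟨m, hm, ⟨fun n ↦ ?_⟩⟩
  have hn := Ideal.mem_of_liesOver m (Ideal.span {(q : ℤ)}) (n : ℤ)
  rw [Ideal.mem_span_singleton, Int.natCast_dvd_natCast] at hn
  rw [hn, ← map_natCast (Ideal.Quotient.mk m), Ideal.Quotient.eq_zero_iff_mem, map_natCast]

variable {f : ℤ[X]} {q : ℕ} [Fact q.Prime] {M : ℕ} {c : ℤ}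

theorem exists_orderOf_dvd_pow_mul_of_isIntegral {R : Type u} [CommRing R] [IsDomain R]
    [CharZero R] [Algebra.IsIntegral ℤ R] (hc : ¬ (q : ℤ) ∣ c)
    (hM : ∀ (k : Type u) [Field k] [CharP k q] (a : k), aeval a f = 0 → a ^ M = c)
    {b ζ : R} (hζb : aeval (ζ * b) f = 0) (hb : aeval b f = 0) (hζ : IsOfFinOrder ζ) :
    ∃ e : ℕ, orderOf ζ ∣ q ^ e * M := by
  obtain ⟨m, hm, _⟩ := exists_isMaximal_charP_quotient R q
  let : Field (R ⧸ m) := Ideal.Quotient.field m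
  let φ : R →ₐ[ℤ] R ⧸ m := Ideal.Quotient.mkₐ ℤ m
  have pow_map_eq {a : R} (ha : aeval a f = 0) : φ a ^ M = c :=
    hM _ _ (by rw [aeval_algHom_apply, ha, map_zero])
  have hc' : (c : R ⧸ m) ≠ 0 := by rwa [Ne, CharP.intCast_eq_zero_iff (R ⧸ m) q]
  refine exists_orderOf_dvd_pow_mul_of_map_pow_eq_one (φ : R →+* R ⧸ m) hζ
    (mul_right_cancel₀ hc' ?_)
  calc φ ζ ^ M * c = φ (ζ * b) ^ M := by rw [map_mul, mul_pow, pow_map_eq hb]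
    _ = 1 * c := by rw [pow_map_eq hζb, one_mul]

theorem exists_orderOf_div_dvd_pow_mul {K : Type u} [Field K] [CharZero K] (hf : f.Monic)
    (hc : ¬ (q : ℤ) ∣ c)
    (hM : ∀ (k : Type u) [Field k] [CharP k q] (a : k), aeval a f = 0 → a ^ M = c)
    {α β : K} (hα : aeval α f = 0) (hβ : aeval β f = 0) (h : IsOfFinOrder (α / β)) :
    ∃ e : ℕ, orderOf (α / β) ∣ q ^ e * M := by
  let R := integralClosure ℤ K
  have aeval_coe (x : R) : aeval (x : K) f = 0 ↔ aeval x f = 0 := aeval_algebraMap_eq_zero_iff K x f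
  have hβ_ne : β ≠ 0 := (div_ne_zero_iff.1 h.isUnit.ne_zero).2
  let ζ : R := ⟨α / β, (IsPrimitiveRoot.orderOf (α / β)).isIntegral h.orderOf_pos⟩
  let b : R := ⟨β, f, hf, hβ⟩
  have hζb : ((ζ * b : R) : K) = α := div_mul_cancel₀ α hβ_ne
  have orderOf_ζ : orderOf (α / β) = orderOf ζ :=
    orderOf_injective (R.val : R →* K) Subtype.val_injective ζ
  rw [orderOf_ζ]
  exact exists_orderOf_dvd_pow_mul_of_isIntegral hc hM ((aeval_coe _).1 (hζb ▸ hα))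
    ((aeval_coe b).1 hβ) (orderOf_pos_iff.1 (orderOf_ζ ▸ h.orderOf_pos))

end Reduction

section WeilPolynomial

/-- The integral model of `P5`, whose roots can be taken in any commutative ring, in particular in
the residue fields of characteristics `2` and `3`. -/
noncomputable def weilPoly : ℤ[X] :=
  X ^ 8 - X ^ 7 + 2 * X ^ 6 - 4 * X ^ 5 + 16 * X ^ 4 - 20 * X ^ 3 + 50 * X ^ 2 - 125 * X + 625

/-- The real Weil polynomial attached to `weilPoly`: its roots are the traces `α + 5 / α`. -/
noncomputable def tracePoly : ℤ[X] := X ^ 4 - X ^ 3 - 18 * X ^ 2 + 11 * X + 46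

/-- The analogue of `tracePoly` for the squares of the roots of `weilPoly`: its roots are the
traces `α ^ 2 + 25 / α ^ 2`. -/
noncomputable def sqTracePoly : ℤ[X] := X ^ 4 + 3 * X ^ 3 - 72 * X ^ 2 - 117 * X + 1146

theorem weilPoly_monic : weilPoly.Monic := by
  unfold weilPoly
  monicity!

theorem P5_eval_eq_aeval_weilPoly (α : ℂ) : P5.eval α = aeval α weilPoly := by
  simp [P5, weilPoly, map_ofNat]

section CommRing

variable {A : Type*} [CommRing A]

theorem aeval_weilPoly (a : A) : aeval a weilPoly =
    a ^ 8 - a ^ 7 + 2 * a ^ 6 - 4 * a ^ 5 + 16 * a ^ 4 - 20 * a ^ 3 + 50 * a ^ 2 - 125 * a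
      + 625 := by
  simp [weilPoly, map_ofNat]

theorem aeval_tracePoly (x : A) :
    aeval x tracePoly = x ^ 4 - x ^ 3 - 18 * x ^ 2 + 11 * x + 46 := by
  simp [tracePoly, map_ofNat]

theorem aeval_sqTracePoly (t : A) :
    aeval t sqTracePoly = t ^ 4 + 3 * t ^ 3 - 72 * t ^ 2 - 117 * t + 1146 := by
  simp [sqTracePoly, map_ofNat]

theorem aeval_weilPoly_of_charP_two [CharP A 2] (a : A) :
    aeval a weilPoly = (a - 1) * (a ^ 7 - 1) := by
  have two_eq_zero : (2 : A) = 0 := CharP.cast_eq_zero A 2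
  rw [aeval_weilPoly]
  linear_combination
    (a ^ 6 - 2 * a ^ 5 + 8 * a ^ 4 - 10 * a ^ 3 + 25 * a ^ 2 - 62 * a + 312) * two_eq_zero

theorem aeval_weilPoly_of_charP_three [CharP A 3] (a : A) :
    aeval a weilPoly = (a ^ 2 - a - 1) ^ 4 := by
  have three_eq_zero : (3 : A) = 0 := CharP.cast_eq_zero A 3
  rw [aeval_weilPoly]
  linear_combination
    (a ^ 7 - 4 * a ^ 5 + 7 * a ^ 4 - 4 * a ^ 3 + 16 * a ^ 2 - 43 * a + 208) * three_eq_zero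

theorem aeval_tracePoly_mul_aeval_neg (x : A) :
    aeval x tracePoly * aeval (-x) tracePoly = aeval (x ^ 2 - 10) sqTracePoly := by
  simp only [aeval_tracePoly, aeval_sqTracePoly]
  ring

end CommRing

theorem pow_seven_eq_one_of_aeval_weilPoly_eq_zero {k : Type*} [CommRing k] [IsDomain k]
    [CharP k 2] {a : k} (ha : aeval a weilPoly = 0) : a ^ 7 = 1 := by
  rw [aeval_weilPoly_of_charP_two, mul_eq_zero, sub_eq_zero, sub_eq_zero] at ha
  rcases ha with rfl | ha
  exacts [one_pow 7, ha]

theorem pow_four_eq_neg_one_of_aeval_weilPoly_eq_zero {k : Type*} [CommRing k] [IsDomain k]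
    [CharP k 3] {a : k} (ha : aeval a weilPoly = 0) : a ^ 4 = -1 := by
  rw [aeval_weilPoly_of_charP_three, pow_eq_zero_iff four_ne_zero] at ha
  have three_eq_zero : (3 : k) = 0 := CharP.cast_eq_zero k 3
  linear_combination (a ^ 2 + a + 2) * ha + (a + 1) * three_eq_zero

theorem aeval_weilPoly_eq_pow_mul_aeval_tracePoly {K : Type*} [Field K] {α : K} (hα : α ≠ 0) :
    aeval α weilPoly = α ^ 4 * aeval (α + 5 / α) tracePoly := by
  rw [aeval_weilPoly, aeval_tracePoly]
  field

variable {K : Type*} [Field K] [CharZero K] {α β : K}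

theorem ne_zero_of_aeval_weilPoly_eq_zero (hα : aeval α weilPoly = 0) : α ≠ 0 := by
  rintro rfl
  norm_num [aeval_weilPoly] at hα

theorem aeval_trace_tracePoly (hα : aeval α weilPoly = 0) :
    aeval (α + 5 / α) tracePoly = 0 := by
  have hα_ne := ne_zero_of_aeval_weilPoly_eq_zero hα
  rw [aeval_weilPoly_eq_pow_mul_aeval_tracePoly hα_ne] at hα
  exact (mul_eq_zero.1 hα).resolve_left (pow_ne_zero 4 hα_ne)

theorem aeval_sq_trace_sqTracePoly (hα : aeval α weilPoly = 0) :
    aeval (α ^ 2 + 25 / α ^ 2) sqTracePoly = 0 := by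
  have hα_ne := ne_zero_of_aeval_weilPoly_eq_zero hα
  have h_sq : α ^ 2 + 25 / α ^ 2 = (α + 5 / α) ^ 2 - 10 := by field
  rw [h_sq, ← aeval_tracePoly_mul_aeval_neg, aeval_trace_tracePoly hα, zero_mul]

theorem aeval_neg_tracePoly_ne_zero {x : K} (hx : aeval x tracePoly = 0) :
    aeval (-x) tracePoly ≠ 0 := by
  intro hx'
  rw [aeval_tracePoly] at hx hx'
  have h_even : x ^ 4 - 18 * x ^ 2 + 46 = 0 := by linear_combination (hx + hx') / 2
  have h_odd : x * (x ^ 2 - 11) = 0 := by linear_combination (hx' - hx) / 2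
  rcases mul_eq_zero.1 h_odd with rfl | h_sq
  · norm_num at h_even
  · have : (31 : K) = 0 := by linear_combination (x ^ 2 - 7) * h_sq - h_even
    norm_num at this

theorem aeval_neg_sqTracePoly_ne_zero {t : K} (ht : aeval t sqTracePoly = 0) :
    aeval (-t) sqTracePoly ≠ 0 := by
  intro ht'
  rw [aeval_sqTracePoly] at ht ht'
  have h_even : t ^ 4 - 72 * t ^ 2 + 1146 = 0 := by linear_combination (ht + ht') / 2
  have h_odd : t * (t ^ 2 - 39) = 0 := by linear_combination (ht - ht') / 6
  rcases mul_eq_zero.1 h_odd with rfl | h_sq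
  · norm_num at h_even
  · have : (141 : K) = 0 := by linear_combination (t ^ 2 - 33) * h_sq - h_even
    norm_num at this

theorem ne_neg_of_aeval_weilPoly_eq_zero (hα : aeval α weilPoly = 0)
    (hβ : aeval β weilPoly = 0) : α ≠ -β := by
  rintro rfl
  refine aeval_neg_tracePoly_ne_zero (aeval_trace_tracePoly hβ) ?_
  convert aeval_trace_tracePoly hα using 2
  rw [div_neg, neg_add]

theorem sq_ne_neg_sq_of_aeval_weilPoly_eq_zero (hα : aeval α weilPoly = 0)
    (hβ : aeval β weilPoly = 0) : α ^ 2 ≠ -β ^ 2 := by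
  intro h_sq
  refine aeval_neg_sqTracePoly_ne_zero (aeval_sq_trace_sqTracePoly hβ) ?_
  convert aeval_sq_trace_sqTracePoly hα using 2
  rw [h_sq, div_neg, neg_add]

theorem eq_of_pow_four_eq_of_aeval_weilPoly_eq_zero (hα : aeval α weilPoly = 0)
    (hβ : aeval β weilPoly = 0) (h : α ^ 4 = β ^ 4) : α = β := by
  have h_sq : α ^ 2 = β ^ 2 :=
    (sq_eq_sq_iff_eq_or_eq_neg.1 (by linear_combination h)).resolve_right
      (sq_ne_neg_sq_of_aeval_weilPoly_eq_zero hα hβ)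
  exact (sq_eq_sq_iff_eq_or_eq_neg.1 h_sq).resolve_right (ne_neg_of_aeval_weilPoly_eq_zero hα hβ)

theorem orderOf_div_dvd_four_of_aeval_weilPoly_eq_zero (hα : aeval α weilPoly = 0)
    (hβ : aeval β weilPoly = 0) (h : IsOfFinOrder (α / β)) : orderOf (α / β) ∣ 4 := by
  obtain ⟨e, he⟩ := exists_orderOf_div_dvd_pow_mul (q := 2) (M := 7) (c := 1) weilPoly_monic
    (by norm_num) (fun _ _ _ _ ha ↦ by simpa using pow_seven_eq_one_of_aeval_weilPoly_eq_zero ha)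
    hα hβ h
  obtain ⟨d, hd⟩ := exists_orderOf_div_dvd_pow_mul (q := 3) (M := 4) (c := -1) weilPoly_monic
    (by norm_num)
    (fun _ _ _ _ ha ↦ by simpa using pow_four_eq_neg_one_of_aeval_weilPoly_eq_zero ha) hα hβ h
  have h_coprime : Nat.Coprime (2 ^ e * 7) (3 ^ d) :=
    .mul_left (.pow e d (by norm_num)) (.pow_right d (by norm_num))
  exact (h_coprime.coprime_dvd_left he).dvd_of_dvd_mul_left hd

end WeilPolynomial

theorem P5_no_root_of_unity_ratio_general {K : Type*} [Field K] [CharZero K] {α β : K}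
    (hα : aeval α weilPoly = 0) (hβ : aeval β weilPoly = 0) (h : IsOfFinOrder (α / β)) :
    α = β := by
  have h_pow : (α / β) ^ 4 = 1 :=
    orderOf_dvd_iff_pow_eq_one.1 (orderOf_div_dvd_four_of_aeval_weilPoly_eq_zero hα hβ h)
  have hβ_pow : β ^ 4 ≠ 0 := pow_ne_zero 4 (ne_zero_of_aeval_weilPoly_eq_zero hβ)
  rw [div_pow, div_eq_one_iff_eq hβ_pow] at h_pow
  exact eq_of_pow_four_eq_of_aeval_weilPoly_eq_zero hα hβ h_pow

/-- If `α` and `β` are complex roots of `P₅` whose ratio is a root of unity, then `α = β`. -/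
theorem P5_no_root_of_unity_ratio (α β : ℂ) (hα : P5.eval α = 0) (hβ : P5.eval β = 0)
    (h : ∃ n : ℕ, 0 < n ∧ (α / β) ^ n = 1) : α = β := by
  rw [P5_eval_eq_aeval_weilPoly] at hα hβ
  exact P5_no_root_of_unity_ratio_general hα hβ (isOfFinOrder_iff_pow_eq_one.2 h)
end
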